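/- For α > -1/2, λ ≥ 0 and n ≥ 3, let x_1 < … < x_n be the zeros of Q_{n,λ}^{(α)} (all real and simple), let N = max_{x∈[x_1,x_n]} |Q_{n,λ}^{(α)}(x)|, and let M_{n,λ} be the smallest real number t > x_n with |Q_{n,λ}^{(α)}(t)| = N. Then for every k with 1 ≤ k ≤ n, the function |d^k/dx^k Q_{n,λ}^{(α)}| attains its maximum over the interval [-M_{n,λ}, M_{n,λ}] at the endpoints; that is, max_{x∈[-M_{n,λ},M_{n,λ}]} |Q_{n,λ}^{(α)(k)}(x)| = |Q_{n,λ}^{(α)(k)}(M_{n,λ})|. -/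

import Mathlib

open Polynomial MeasureTheory Real Set

/-- The Gegenbauer inner product `∫ f g (1-x²)^{α-1/2}` on `(-1,1)`. -/
noncomputable def gegInner (α : ℝ) (f g : Polynomial ℝ) : ℝ :=
  ∫ x in Set.Ioo (-1 : ℝ) 1, f.eval x * g.eval x * (1 - x ^ 2) ^ (α - 1/2)

/-- `C` is the monic Gegenbauer polynomial of degree `n` for parameter `α`. -/
def IsMonicGegenbauer (α : ℝ) (n : ℕ) (C : Polynomial ℝ) : Prop :=
  C.Monic ∧ C.natDegree = n ∧
    ∀ p : Polynomial ℝ, p.degree < (n : ℕ) → gegInner α C p = 0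

/-- The Gegenbauer–Sobolev inner product. -/
noncomputable def sobInner (α lam : ℝ) (f g : Polynomial ℝ) : ℝ :=
  gegInner α f g + lam * gegInner α (derivative f) (derivative g)

/-- `Q` is the monic Gegenbauer–Sobolev polynomial of degree `n`. -/
def IsMonicGegSobolev (α lam : ℝ) (n : ℕ) (Q : Polynomial ℝ) : Prop :=
  Q.Monic ∧ Q.natDegree = n ∧
    ∀ p : Polynomial ℝ, p.degree < (n : ℕ) → sobInner α lam Q p = 0

/-!
For a polynomial `p` of definite parity with only real roots, all below `M`, maximality of `|p|` on
`[-M, M]` at the endpoints is inherited by `p'`. The interior maxima of `|p'|` in question are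
points `y` with `p''(y) = 0`. The substitution `x = M - w (M - y)` turns `p / p(M)` into
`P(w) = ∏ (1 - v w)` with positive weights `v` of sum `s`, with `|P| ≤ 1` on `[0, 2]` and
`P''(1) = 0`, and the claim becomes `|P'(1)| ≤ s`. For `s ≤ 2` it is a triangle inequality.

Suppose `s ≥ 2` and `|P'(1)| > s`. Along the imaginary direction, `F(t ^ 2) = |P(1 + i t)|²` is a
polynomial in `t ^ 2` with nonnegative coefficients and `F(-t ^ 2) = P(1 + t) P(1 - t) ≥ -1` for
`t ∈ [0, 1]`. A Bonferroni inequality gives a discriminant bound for the 2-jet of `F`, whence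
`F(η ^ 2) > 1 + (η s) ^ 2 + (η s) ^ 4 / 8` whenever `η s ≥ 2`. For moderate `s` this contradicts
the factorwise bound at `η = 1`. For large `s` it contradicts `F(η ^ 2) ≤ 7` at `η = 2 / s`, which
follows from `|P| ≤ 1` on an interval `[1 - a, 1 + a]`: pulled back by `ζ ↦ 1 - a Re ζ` and divided
by its zeros, `P` becomes a zero-free function on the disc bounded by `1`, to which Harnack's
inequality applies with the normalisation `P(0) = 1`.
-/

section LinearProd

/-- The product of the linear polynomials `a + b X` over a multiset of pairs `(a, b)`. -/
noncomputable def linearProd (m : Multiset (ℝ × ℝ)) : ℝ[X] :=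
  (m.map fun c => C c.1 + C c.2 * X).prod

@[simp]
lemma linearProd_zero : linearProd 0 = 1 := by simp [linearProd]

lemma linearProd_cons (c : ℝ × ℝ) (m : Multiset (ℝ × ℝ)) :
    linearProd (c ::ₘ m) = (C c.1 + C c.2 * X) * linearProd m := by simp [linearProd]

lemma eval_linearProd (m : Multiset (ℝ × ℝ)) (x : ℝ) :
    (linearProd m).eval x = (m.map fun c => c.1 + c.2 * x).prod := by
  simp [linearProd, eval_multiset_prod]

lemma eval_neg_linearProd_cons (c : ℝ × ℝ) (m : Multiset (ℝ × ℝ)) (s : ℝ) :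
    (linearProd (c ::ₘ m)).eval (-s) = (c.1 - c.2 * s) * (linearProd m).eval (-s) := by
  simp [linearProd_cons, sub_eq_add_neg]

lemma coeff_zero_linearProd_cons (c : ℝ × ℝ) (m : Multiset (ℝ × ℝ)) :
    (linearProd (c ::ₘ m)).coeff 0 = c.1 * (linearProd m).coeff 0 := by
  simp [linearProd_cons, mul_coeff_zero]

lemma coeff_succ_linearProd_cons (c : ℝ × ℝ) (m : Multiset (ℝ × ℝ)) (k : ℕ) :
    (linearProd (c ::ₘ m)).coeff (k + 1) =
      c.1 * (linearProd m).coeff (k + 1) + c.2 * (linearProd m).coeff k := by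
  rw [linearProd_cons, add_mul, coeff_add, mul_assoc, coeff_C_mul, coeff_C_mul, coeff_X_mul]

lemma coeff_one_linearProd_cons (c : ℝ × ℝ) (m : Multiset (ℝ × ℝ)) :
    (linearProd (c ::ₘ m)).coeff 1 =
      c.1 * (linearProd m).coeff 1 + c.2 * (linearProd m).coeff 0 :=
  coeff_succ_linearProd_cons c m 0

lemma coeff_two_linearProd_cons (c : ℝ × ℝ) (m : Multiset (ℝ × ℝ)) :
    (linearProd (c ::ₘ m)).coeff 2 =
      c.1 * (linearProd m).coeff 2 + c.2 * (linearProd m).coeff 1 :=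
  coeff_succ_linearProd_cons c m 1

-- Coefficient form of `P (-t ^ 2) = F t * F (-t)`, with `P` the left and `F` the right product.
lemma coeff_linearProd_sq (m : Multiset (ℝ × ℝ)) :
    (linearProd (m.map fun c => (c.1 ^ 2, c.2 ^ 2))).coeff 0 = (linearProd m).coeff 0 ^ 2 ∧
    (linearProd (m.map fun c => (c.1 ^ 2, c.2 ^ 2))).coeff 1 =
      (linearProd m).coeff 1 ^ 2 - 2 * (linearProd m).coeff 0 * (linearProd m).coeff 2 := by
  induction m using Multiset.induction with
  | empty => simp [coeff_one]
  | cons c m ih =>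
    simp only [Multiset.map_cons, coeff_zero_linearProd_cons, coeff_one_linearProd_cons,
      coeff_two_linearProd_cons, ih.1, ih.2]
    constructor <;> ring

lemma coeff_linearProd_nonneg {m : Multiset (ℝ × ℝ)} (hm : ∀ c ∈ m, 0 ≤ c.1 ∧ 0 ≤ c.2) (k : ℕ) :
    0 ≤ (linearProd m).coeff k := by
  induction m using Multiset.induction generalizing k with
  | empty => rw [linearProd_zero, coeff_one]; split_ifs <;> norm_num
  | cons c m ih =>
    have hc := hm c (Multiset.mem_cons_self c m)
    have ih := ih fun d hd => hm d (Multiset.mem_cons_of_mem hd)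
    cases k with
    | zero => rw [coeff_zero_linearProd_cons]; exact mul_nonneg hc.1 (ih 0)
    | succ k =>
      rw [coeff_succ_linearProd_cons]
      exact add_nonneg (mul_nonneg hc.1 (ih _)) (mul_nonneg hc.2 (ih _))

lemma sum_range_coeff_mul_pow_le_eval {p : ℝ[X]} (hp : ∀ k, 0 ≤ p.coeff k) {x : ℝ} (hx : 0 ≤ x)
    (n : ℕ) : ∑ k ∈ Finset.range n, p.coeff k * x ^ k ≤ p.eval x := by
  rw [eval_eq_sum_range' (lt_of_lt_of_le p.natDegree.lt_succ_self (le_max_right n _))]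
  exact Finset.sum_le_sum_of_subset_of_nonneg
    (Finset.range_subset_range.2 (le_max_left n (p.natDegree + 1)))
    fun k _ _ => mul_nonneg (hp k) (pow_nonneg hx k)

/-! ### Bonferroni bounds and a discriminant inequality -/

lemma bonferroni_linearProd {m : Multiset (ℝ × ℝ)} (hm : ∀ c ∈ m, 0 ≤ c.1 ∧ 0 ≤ c.2) {s : ℝ}
    (hs : 0 ≤ s) (h : ∀ c ∈ m, c.2 * s ≤ c.1) :
    0 ≤ (linearProd m).eval (-s) ∧ (linearProd m).eval (-s) ≤ (linearProd m).coeff 0 ∧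
    (linearProd m).coeff 0 - (linearProd m).coeff 1 * s ≤ (linearProd m).eval (-s) ∧
    (linearProd m).eval (-s) ≤
      (linearProd m).coeff 0 - (linearProd m).coeff 1 * s + (linearProd m).coeff 2 * s ^ 2 := by
  induction m using Multiset.induction with
  | empty => simp [coeff_one]
  | cons c m ih =>
    obtain ⟨h0, h1, h2, h3⟩ := ih (fun d hd => hm d (Multiset.mem_cons_of_mem hd))
      fun d hd => h d (Multiset.mem_cons_of_mem hd)
    obtain ⟨hA, hB⟩ := hm c (Multiset.mem_cons_self c m)
    have hc := h c (Multiset.mem_cons_self c m)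
    have hBs : 0 ≤ c.2 * s := mul_nonneg hB hs
    rw [eval_neg_linearProd_cons, coeff_zero_linearProd_cons, coeff_one_linearProd_cons,
    coeff_two_linearProd_cons]
    refine ⟨mul_nonneg (sub_nonneg.2 hc) h0, ?_, ?_, ?_⟩
    · nlinarith [mul_nonneg hBs h0]
    · nlinarith [mul_le_mul_of_nonneg_left h2 hA, mul_le_mul_of_nonneg_left h1 hBs]
    · nlinarith [mul_le_mul_of_nonneg_left h3 hA, mul_le_mul_of_nonneg_left h2 hBs]

-- One factor is allowed to be negative at `-s`.
lemma eval_linearProd_cons_le {b : ℝ × ℝ} {m : Multiset (ℝ × ℝ)}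
    (hm : ∀ c ∈ b ::ₘ m, 0 ≤ c.1 ∧ 0 ≤ c.2) {s : ℝ} (hs : 0 ≤ s) (h : ∀ c ∈ m, c.2 * s ≤ c.1) :
    (linearProd (b ::ₘ m)).eval (-s) ≤ (linearProd (b ::ₘ m)).coeff 0
      - (linearProd (b ::ₘ m)).coeff 1 * s + (linearProd (b ::ₘ m)).coeff 2 * s ^ 2 := by
  obtain ⟨-, -, h2, h3⟩ :=
    bonferroni_linearProd (fun c hc => hm c (Multiset.mem_cons_of_mem hc)) hs h
  obtain ⟨hA, hB⟩ := hm b (Multiset.mem_cons_self b m)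
  rw [eval_neg_linearProd_cons, coeff_zero_linearProd_cons, coeff_one_linearProd_cons,
    coeff_two_linearProd_cons]
  nlinarith [mul_le_mul_of_nonneg_left h3 hA, mul_le_mul_of_nonneg_left h2 (mul_nonneg hB hs)]

lemma exists_mem_forall_mul_le_mul {m : Multiset (ℝ × ℝ)} (hm : ∀ c ∈ m, 0 < c.2) (hne : m ≠ 0) :
    ∃ b ∈ m, ∀ c ∈ m, b.1 * c.2 ≤ c.1 * b.2 := by
  obtain ⟨b, hb, hmin⟩ := Finset.exists_min_image m.toFinset (fun c => c.1 / c.2)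
    (Multiset.toFinset_nonempty.2 hne)
  rw [Multiset.mem_toFinset] at hb
  refine ⟨b, hb, fun c hc => ?_⟩
  exact (div_le_div_iff₀ (hm b hb) (hm c hc)).1 (hmin c (Multiset.mem_toFinset.2 hc))

-- The second root of `linearProd m (-s)` is at least the vertex `c₁ / (2 c₂)` of its 2-jet.
lemma snd_mul_coeff_one_le {b c : ℝ × ℝ} {m : Multiset (ℝ × ℝ)}
    (hm : ∀ d ∈ b ::ₘ c ::ₘ m, 0 ≤ d.1 ∧ 0 ≤ d.2) (hbc : b.1 * c.2 ≤ c.1 * b.2) :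
    c.2 * (linearProd (b ::ₘ c ::ₘ m)).coeff 1 ≤
      2 * c.1 * (linearProd (b ::ₘ c ::ₘ m)).coeff 2 := by
  obtain ⟨hb₁, hb₂⟩ := hm b (by simp)
  obtain ⟨hc₁, hc₂⟩ := hm c (by simp)
  have hcoeff := coeff_linearProd_nonneg (m := m) fun d hd => hm d (by simp [hd])
  have h0 := hcoeff 0
  have h1 := hcoeff 1
  have h2 := hcoeff 2
  simp only [coeff_zero_linearProd_cons, coeff_one_linearProd_cons, coeff_two_linearProd_cons]
  have hmain := mul_le_mul_of_nonneg_right hbc (mul_nonneg hc₂ h0)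
  nlinarith [mul_nonneg (mul_nonneg hc₁ hb₁) (mul_nonneg hc₁ h2),
    mul_nonneg (mul_nonneg hc₁ hb₂) (mul_nonneg hc₁ h1),
    mul_nonneg (mul_nonneg hc₁ hb₁) (mul_nonneg hc₂ h1)]

lemma coeff_one_sq_le_of_neg_one_le_eval {m : Multiset (ℝ × ℝ)}
    (hm : ∀ c ∈ m, 0 ≤ c.1 ∧ 0 < c.2) (hP : ∀ s ∈ Icc (0 : ℝ) 1, -1 ≤ (linearProd m).eval (-s))
    (h0 : (linearProd m).coeff 0 ≤ 1) (h1 : 4 < (linearProd m).coeff 1) :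
    (linearProd m).coeff 1 ^ 2 ≤
      4 * (linearProd m).coeff 2 * (1 + (linearProd m).coeff 0) := by
  have hne : m ≠ 0 := by
    rintro rfl
    norm_num [coeff_one] at h1
  obtain ⟨b, hb, hmin⟩ := exists_mem_forall_mul_le_mul (fun c hc => (hm c hc).2) hne
  obtain ⟨m, rfl⟩ := Multiset.exists_cons_of_mem hb
  have hm' : ∀ c ∈ b ::ₘ m, 0 ≤ c.1 ∧ 0 ≤ c.2 := fun c hc => ⟨(hm c hc).1, (hm c hc).2.le⟩
  have hroot : ∀ c ∈ m, c.2 * (linearProd (b ::ₘ m)).coeff 1 ≤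
      2 * c.1 * (linearProd (b ::ₘ m)).coeff 2 := by
    intro c hc
    have hbc := hmin c (Multiset.mem_cons_of_mem hc)
    obtain ⟨m', rfl⟩ := Multiset.exists_cons_of_mem hc
    exact snd_mul_coeff_one_le hm' hbc
  have hjet := fun s => eval_linearProd_cons_le hm' (s := s)
  generalize linearProd (b ::ₘ m) = P at hroot h0 h1 hP hjet ⊢
  by_contra! hcon
  rcases le_total (P.coeff 1) (2 * P.coeff 2) with hvertex | hvertex
  · have hc₂ : 0 < P.coeff 2 := by linarith
    have hs : P.coeff 1 / (2 * P.coeff 2) ∈ Icc (0 : ℝ) 1 :=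
      ⟨by positivity, (div_le_one (by positivity)).2 hvertex⟩
    have hupper := hjet _ hs.1 fun c hc => by
      rw [← mul_div_assoc, div_le_iff₀ (by positivity)]
      linarith [hroot c hc]
    have hval : P.coeff 0 - P.coeff 1 * (P.coeff 1 / (2 * P.coeff 2))
        + P.coeff 2 * (P.coeff 1 / (2 * P.coeff 2)) ^ 2 =
        P.coeff 0 - P.coeff 1 ^ 2 / (4 * P.coeff 2) := by field_simp; ring
    have hlt : 1 + P.coeff 0 < P.coeff 1 ^ 2 / (4 * P.coeff 2) := by
      rw [lt_div_iff₀ (by positivity)]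
      linarith
    linarith [hP _ hs]
  · have hupper := hjet 1 zero_le_one fun c hc => by
      have hc₁ := (hm c (Multiset.mem_cons_of_mem hc)).1
      nlinarith [hroot c hc, mul_le_mul_of_nonneg_left hvertex hc₁]
    linarith [hP 1 (right_mem_Icc.2 zero_le_one)]

/-! ### The lower bound along the imaginary direction -/

/-- The polynomial `∏ (1 - x X)` over a multiset of `x`'s: it equals `1` at `0`, has slope
`-v.sum` there, and its roots are the reciprocals of the nonzero members of `v`. -/
noncomputable def reciprocalProd (v : Multiset ℝ) : ℝ[X] :=
  linearProd (v.map fun x => (1, -x))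

lemma eval_reciprocalProd (v : Multiset ℝ) (w : ℝ) :
    (reciprocalProd v).eval w = (v.map fun x => 1 - x * w).prod := by
  simp [reciprocalProd, eval_linearProd, sub_eq_add_neg]

lemma taylor_one_reciprocalProd (v : Multiset ℝ) :
    taylor 1 (reciprocalProd v) = linearProd (v.map fun x => (1 - x, -x)) := by
  refine funext fun w => ?_
  rw [taylor_eval, eval_reciprocalProd, eval_linearProd, Multiset.map_map]
  exact congrArg _ (Multiset.map_congr rfl fun x _ => by simp only [Function.comp_apply]; ring)

/-- The polynomial `∏ ((1 - x) ^ 2 + x ^ 2 X)`, whose value at `t ^ 2` is the squared modulus of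
`reciprocalProd v` at `1 + i t`. -/
noncomputable def normSqProd (v : Multiset ℝ) : ℝ[X] :=
  linearProd (v.map fun x => ((1 - x) ^ 2, x ^ 2))

lemma eval_normSqProd (v : Multiset ℝ) (t : ℝ) :
    (normSqProd v).eval t = (v.map fun x => (1 - x) ^ 2 + x ^ 2 * t).prod := by
  simp [normSqProd, eval_linearProd]

lemma eval_normSqProd_pos {v : Multiset ℝ} (hv : ∀ x ∈ v, 0 < x) {t : ℝ} (ht : 0 < t) :
    0 < (normSqProd v).eval t := by
  rw [eval_normSqProd]
  refine Multiset.prod_pos fun y hy => ?_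
  obtain ⟨x, hx, rfl⟩ := Multiset.mem_map.1 hy
  have hx := hv x hx
  positivity

lemma eval_neg_sq_normSqProd (v : Multiset ℝ) (t : ℝ) :
    (normSqProd v).eval (-t ^ 2) =
      (reciprocalProd v).eval (1 + t) * (reciprocalProd v).eval (1 - t) := by
  rw [eval_normSqProd, eval_reciprocalProd, eval_reciprocalProd, ← Multiset.prod_map_mul]
  exact congrArg _ (Multiset.map_congr rfl fun x _ => by ring)

lemma coeff_normSqProd (v : Multiset ℝ) :
    (normSqProd v).coeff 0 = (reciprocalProd v).eval 1 ^ 2 ∧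
    (normSqProd v).coeff 1 = (reciprocalProd v).derivative.eval 1 ^ 2 -
      (reciprocalProd v).eval 1 * (derivative^[2] (reciprocalProd v)).eval 1 := by
  obtain ⟨h0, h1⟩ := coeff_linearProd_sq (v.map fun x => (1 - x, -x))
  have h2 : 2 * (taylor 1 (reciprocalProd v)).coeff 2 =
      (derivative^[2] (reciprocalProd v)).eval 1 := by
    rw [taylor_coeff, ← factorial_smul_hasseDeriv]
    simp
  simp only [Multiset.map_map, Function.comp_apply, neg_sq, ← taylor_one_reciprocalProd] at h0 h1
  rw [taylor_coeff_zero] at h0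
  rw [taylor_coeff_one, taylor_coeff_zero] at h1
  exact ⟨h0, by rw [← h2, ← mul_assoc, mul_right_comm, mul_comm _ (2 : ℝ), ← mul_assoc]; exact h1⟩

-- Both coefficients enter through `u = c₀` and `z = c₂ η ^ 4`, and `z ≥ t ^ 4 / (4 (1 + u))`.
lemma quartic_lt_of_discriminant_bound {u z t τ : ℝ} (hu₀ : 0 ≤ u) (hu₁ : u ≤ 1)
    (hτ : 2 ≤ τ) (ht : τ < t) (hz : t ^ 4 ≤ 4 * z * (1 + u)) :
    1 + τ ^ 2 + τ ^ 4 / 8 < u + t ^ 2 + z := by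
  have h2 : τ ^ 2 < t ^ 2 := by gcongr
  have h4 : τ ^ 4 < t ^ 4 := by gcongr
  have h16 : (2 : ℝ) ^ 4 ≤ τ ^ 4 := by gcongr
  have hsum : 1 + t ^ 4 / 8 ≤ u + z := by
    by_contra! hcon
    nlinarith [mul_nonneg (sub_nonneg.2 hu₁) hu₀]
  linarith

lemma quartic_lt_eval_normSqProd {v : Multiset ℝ} (hv : ∀ x ∈ v, 0 < x)
    (hbound : ∀ w ∈ Icc (0 : ℝ) 2, |(reciprocalProd v).eval w| ≤ 1)
    (hcrit : (derivative^[2] (reciprocalProd v)).eval 1 = 0) {s : ℝ} (hs : 2 ≤ s)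
    (hlt : s < |(reciprocalProd v).derivative.eval 1|) {η : ℝ} (hη : 0 < η) (hηs : 2 ≤ η * s) :
    1 + (η * s) ^ 2 + (η * s) ^ 4 / 8 < (normSqProd v).eval (η ^ 2) := by
  have hpairs : ∀ c ∈ v.map fun x => ((1 - x) ^ 2, x ^ 2), 0 ≤ c.1 ∧ 0 < c.2 := by
    simp only [Multiset.mem_map]
    rintro _ ⟨x, hx, rfl⟩
    exact ⟨sq_nonneg _, pow_pos (hv x hx) 2⟩
  have hcoeff : ∀ k, 0 ≤ (normSqProd v).coeff k :=
    coeff_linearProd_nonneg fun c hc => ⟨(hpairs c hc).1, (hpairs c hc).2.le⟩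
  obtain ⟨h0, h1⟩ := coeff_normSqProd v
  rw [hcrit, mul_zero, sub_zero, ← sq_abs] at h1
  have h0' : (normSqProd v).coeff 0 ≤ 1 := by
    rw [h0, sq_le_one_iff_abs_le_one]
    exact hbound 1 ⟨by norm_num, by norm_num⟩
  have hneg : ∀ t ∈ Icc (0 : ℝ) 1, -1 ≤ (normSqProd v).eval (-t) := by
    intro t ht
    have hle : √t ≤ 1 := Real.sqrt_le_one.2 ht.2
    have hnonneg := Real.sqrt_nonneg t
    rw [← Real.sq_sqrt ht.1, eval_neg_sq_normSqProd]
    refine (abs_le.1 ?_).1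
    rw [abs_mul]
    exact mul_le_one₀ (hbound _ ⟨by linarith, by linarith⟩) (abs_nonneg _)
      (hbound _ ⟨by linarith, by linarith⟩)
  have hdisc := coeff_one_sq_le_of_neg_one_le_eval hpairs hneg h0' (by
    change 4 < (normSqProd v).coeff 1
    rw [h1]; nlinarith)
  change (normSqProd v).coeff 1 ^ 2 ≤
    4 * (normSqProd v).coeff 2 * (1 + (normSqProd v).coeff 0) at hdisc
  have htrunc := sum_range_coeff_mul_pow_le_eval hcoeff (sq_nonneg η) 3
  simp only [Finset.sum_range_succ, Finset.sum_range_zero] at htrunc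
  rw [h1] at hdisc htrunc
  have hjet := quartic_lt_of_discriminant_bound (hcoeff 0) h0' hηs
    (mul_lt_mul_of_pos_left hlt hη) (z := (normSqProd v).coeff 2 * η ^ 4) (by
      nlinarith [mul_le_mul_of_nonneg_right hdisc (pow_nonneg hη.le 4)])
  refine hjet.trans_le (le_trans (le_of_eq ?_) htrunc)
  ring

end LinearProd

/-! ### Moderate total weight -/

section ModerateSum

lemma one_sub_sq_add_sq_le_exp {x : ℝ} (hx : 0 ≤ x) : (1 - x) ^ 2 + x ^ 2 ≤ exp (7 / 8 * x) := by
  have htaylor := Real.sum_le_exp_of_nonneg (show 0 ≤ 7 / 8 * x by positivity) 6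
  simp only [Finset.sum_range_succ, Finset.sum_range_zero, Nat.factorial] at htaylor
  -- After division by `x` the difference is convex, with its minimum near `71 / 25`.
  have htangent := fun k : ℕ =>
    one_add_mul_sub_le_pow (show -1 ≤ x / (71 / 25) by linarith [div_nonneg hx (by norm_num :
      (0 : ℝ) ≤ 71 / 25)]) k
  have h2 := mul_le_mul_of_nonneg_left (htangent 2) hx
  have h3 := mul_le_mul_of_nonneg_left (htangent 3) hx
  have h4 := mul_le_mul_of_nonneg_left (htangent 4) hx
  norm_num at htaylor h2 h3 h4
  nlinarith

lemma hasDerivAt_log_quartic {t : ℝ} (ht : 0 < t) :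
    HasDerivAt (fun τ : ℝ => log (1 + τ ^ 2 + τ ^ 4 / 8))
      ((2 * t + t ^ 3 / 2) / (1 + t ^ 2 + t ^ 4 / 8)) t := by
  have hquartic : HasDerivAt (fun τ : ℝ => 1 + τ ^ 2 + τ ^ 4 / 8) (2 * t + t ^ 3 / 2) t := by
    refine (((hasDerivAt_pow 2 t).const_add 1).add
      ((hasDerivAt_pow 4 t).div_const 8)).congr_deriv ?_
    norm_num
    ring
  exact hquartic.log (by positivity)

lemma concaveOn_log_quartic : ConcaveOn ℝ (Ici 2) fun τ : ℝ => log (1 + τ ^ 2 + τ ^ 4 / 8) := by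
  have hpos : ∀ x ∈ Ici (2 : ℝ), 0 < x := fun x hx => two_pos.trans_le hx
  refine AntitoneOn.concaveOn_of_deriv (convex_Ici 2)
    (fun x hx => (hasDerivAt_log_quartic (hpos x hx)).continuousAt.continuousWithinAt)
    (fun x hx => (hasDerivAt_log_quartic
      (hpos x (interior_subset hx))).differentiableAt.differentiableWithinAt) ?_
  intro a ha b hb hab
  rw [interior_Ici, mem_Ioi] at ha hb
  rw [(hasDerivAt_log_quartic (by linarith)).deriv, (hasDerivAt_log_quartic (by linarith)).deriv,
    div_le_div_iff₀ (by positivity) (by positivity), ← sub_nonneg]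
  obtain ⟨p, rfl⟩ : ∃ p, a = 2 + p := ⟨a - 2, by ring⟩
  obtain ⟨q, rfl⟩ : ∃ q, b = 2 + p + q := ⟨b - (2 + p), by ring⟩
  have hp : 0 ≤ p := by linarith
  have hq : 0 ≤ q := by linarith
  ring_nf
  positivity

lemma lt_log_seven : 1.944 < log 7 := by
  have h2400 : 5 * log 2 + log 3 + 2 * log 5 < 4 * log 7 := by
    simp only [← Nat.cast_ofNat (R := ℝ), ← log_pow]
    rw [← log_mul (by norm_num) (by norm_num), ← log_mul (by norm_num) (by norm_num)]
    exact log_lt_log (by norm_num) (by norm_num)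
  linarith [log_two_gt_d9, log_three_gt_d9, log_five_gt_d9]

lemma exp_le_quartic {τ : ℝ} (h2 : 2 ≤ τ) (hτ : τ ≤ 307 / 50) :
    exp (7 / 8 * τ) ≤ 1 + τ ^ 2 + τ ^ 4 / 8 := by
  rw [← le_log_iff_exp_le (by positivity)]
  have hconc : ConcaveOn ℝ (Ici 2) fun τ : ℝ => log (1 + τ ^ 2 + τ ^ 4 / 8) - 7 / 8 * τ :=
    concaveOn_log_quartic.sub (LinearMap.convexOn (LinearMap.mulLeft ℝ (7 / 8)) (convex_Ici 2))
  have hmin := hconc.min_le_of_mem_Icc (x := 2) (y := 307 / 50) (by norm_num) (by norm_num) ⟨h2, hτ⟩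
  have hleft : (0 : ℝ) ≤ log (1 + 2 ^ 2 + 2 ^ 4 / 8) - 7 / 8 * 2 := by
    norm_num
    linarith [lt_log_seven]
  have hright : (0 : ℝ) ≤ log (1 + (307 / 50) ^ 2 + (307 / 50) ^ 4 / 8) - 7 / 8 * (307 / 50) := by
    have h216 : 3 * (log 2 + log 3) ≤ log (1 + (307 / 50) ^ 2 + (307 / 50) ^ 4 / 8) := by
      rw [← log_mul (by norm_num) (by norm_num), ← Nat.cast_ofNat, ← log_pow]
      exact log_le_log (by norm_num) (by norm_num)
    linarith [log_two_gt_d9, log_three_gt_d9]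
  linarith [le_min hleft hright]

lemma prod_map_le_exp_mul_sum {v : Multiset ℝ} {f : ℝ → ℝ} {c : ℝ} (h0 : ∀ x ∈ v, 0 ≤ f x)
    (h : ∀ x ∈ v, f x ≤ exp (c * x)) : (v.map f).prod ≤ exp (c * v.sum) := by
  refine (Multiset.prod_map_le_prod_map₀ f (fun x => exp (c * x)) h0 h).trans_eq ?_
  rw [← Multiset.map_id' v, ← Multiset.sum_map_mul_left, Real.exp_multiset_sum, Multiset.map_id',
    Multiset.map_map]
  rfl

lemma eval_one_normSqProd_le {v : Multiset ℝ} (hv : ∀ x ∈ v, 0 < x) (h2 : 2 ≤ v.sum)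
    (hsum : v.sum ≤ 307 / 50) : (normSqProd v).eval 1 ≤ 1 + v.sum ^ 2 + v.sum ^ 4 / 8 := by
  rw [eval_normSqProd]
  exact (prod_map_le_exp_mul_sum (fun x _ => by positivity) fun x hx => by
    simpa using one_sub_sq_add_sq_le_exp (hv x hx).le).trans (exp_le_quartic h2 hsum)

end ModerateSum

/-! ### Harnack inequalities on the disc -/

section Harnack

open Metric InnerProductSpace

variable {f : ℂ → ℝ} {R : ℝ}

lemma continuousOn_poissonKernel_sphere {w : ℂ} (hw : w ∈ ball 0 R) :
    ContinuousOn (poissonKernel 0 w) (sphere 0 |R|) := by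
  rw [poissonKernel_eq_re_herglotzRieszKernel]
  exact Complex.continuous_re.comp_continuousOn (continuousOn_herglotzRieszKernel_sphere hw)

lemma circleAverage_mul_le_circleAverage_mul {K L : ℂ → ℝ} (hK : ContinuousOn K (sphere 0 |R|))
    (hL : ContinuousOn L (sphere 0 |R|)) (hf : ContinuousOn f (sphere 0 |R|))
    (hle : ∀ ζ ∈ sphere (0 : ℂ) |R|, L ζ ≤ K ζ) (hneg : ∀ ζ ∈ sphere (0 : ℂ) |R|, f ζ ≤ 0) :
    circleAverage (fun ζ => K ζ * f ζ) 0 R ≤ circleAverage (fun ζ => L ζ * f ζ) 0 R :=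
  circleAverage_mono (hK.mul hf).circleIntegrable' (hL.mul hf).circleIntegrable' fun ζ hζ =>
    mul_le_mul_of_nonpos_right (hle ζ hζ) (hneg ζ hζ)

lemma poissonKernel_le {w ζ : ℂ} (hw : w ∈ ball 0 R) (hζ : ζ ∈ sphere 0 R) :
    poissonKernel 0 w ζ ≤ (R + ‖w‖) / (R - ‖w‖) := by
  simpa [poissonKernel_eq_re_herglotzRieszKernel, herglotzRieszKernel_def] using
    re_herglotzRieszKernel_le hζ hw

-- By the parallelogram law this is the inequality between harmonic and arithmetic means.
lemma le_poissonKernel_add_poissonKernel_neg {w ζ : ℂ} (hw : w ∈ ball 0 R) (hζ : ζ ∈ sphere 0 R) :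
    (R ^ 2 - ‖w‖ ^ 2) / (R ^ 2 + ‖w‖ ^ 2) ≤
      (poissonKernel 0 w ζ + poissonKernel 0 (-w) ζ) / 2 := by
  rw [mem_ball_zero_iff] at hw
  rw [mem_sphere_zero_iff_norm] at hζ
  simp only [poissonKernel_def, sub_zero, norm_neg, hζ]
  have hparallelogram : ‖ζ - w‖ ^ 2 + ‖ζ - -w‖ ^ 2 = 2 * (R ^ 2 + ‖w‖ ^ 2) := by
    have := parallelogram_law_with_norm ℝ ζ w
    rw [sub_neg_eq_add, ← hζ]
    linarith
  have hminus : 0 < ‖ζ - w‖ ^ 2 := by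
    have := norm_sub_norm_le ζ w
    exact pow_pos (by linarith) 2
  have hplus : 0 < ‖ζ - -w‖ ^ 2 := by
    have := norm_sub_norm_le ζ (-w)
    rw [norm_neg] at this
    exact pow_pos (by linarith) 2
  have hnum : 0 ≤ R ^ 2 - ‖w‖ ^ 2 := by nlinarith [norm_nonneg w]
  rw [show R ^ 2 + ‖w‖ ^ 2 = (‖ζ - w‖ ^ 2 + ‖ζ - -w‖ ^ 2) / 2 by linarith]
  generalize ‖ζ - w‖ ^ 2 = A at *
  generalize ‖ζ - -w‖ ^ 2 = B at *
  have hgap : ((R ^ 2 - ‖w‖ ^ 2) / A + (R ^ 2 - ‖w‖ ^ 2) / B) / 2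
      - (R ^ 2 - ‖w‖ ^ 2) / ((A + B) / 2) =
      (R ^ 2 - ‖w‖ ^ 2) * (A - B) ^ 2 / (2 * A * B * (A + B)) := by field_simp; ring
  rw [← sub_nonneg, hgap]
  positivity

lemma circleAverage_eq_center (hf : HarmonicOnNhd f (closedBall 0 R)) (hR : 0 < R) :
    circleAverage f 0 R = f 0 :=
  InnerProductSpace.HarmonicOnNhd.circleAverage_eq (by rwa [abs_of_pos hR])

lemma continuousOn_sphere_of_harmonic (hf : HarmonicOnNhd f (closedBall 0 R)) (hR : 0 < R) :
    ContinuousOn f (sphere 0 |R|) :=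
  hf.continuousOn.mono (by rw [abs_of_pos hR]; exact sphere_subset_closedBall)

lemma mul_center_le_of_harmonic_nonpos (hf : HarmonicOnNhd f (closedBall 0 R))
    (hneg : ∀ ζ ∈ sphere (0 : ℂ) R, f ζ ≤ 0) {w : ℂ} (hw : w ∈ ball 0 R) :
    (R + ‖w‖) / (R - ‖w‖) * f 0 ≤ f w := by
  have hR : 0 < R := pos_of_mem_ball hw
  have hle := circleAverage_mul_le_circleAverage_mul (L := poissonKernel 0 w)
    (K := fun _ => (R + ‖w‖) / (R - ‖w‖)) continuousOn_const (continuousOn_poissonKernel_sphere hw)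
    (continuousOn_sphere_of_harmonic hf hR)
    (fun ζ hζ => poissonKernel_le hw (by rwa [abs_of_pos hR] at hζ))
    (fun ζ hζ => hneg ζ (by rwa [abs_of_pos hR] at hζ))
  rw [← circleAverage_eq_center hf hR, ← hf.circleAverage_poissonKernel_smul hw, ← smul_eq_mul,
    ← circleAverage_fun_smul]
  exact hle

lemma add_neg_le_mul_center_of_harmonic_nonpos (hf : HarmonicOnNhd f (closedBall 0 R))
    (hneg : ∀ ζ ∈ sphere (0 : ℂ) R, f ζ ≤ 0) {w : ℂ} (hw : w ∈ ball 0 R) :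
    (f w + f (-w)) / 2 ≤ (R ^ 2 - ‖w‖ ^ 2) / (R ^ 2 + ‖w‖ ^ 2) * f 0 := by
  have hR : 0 < R := pos_of_mem_ball hw
  have hw' : -w ∈ ball 0 R := by simpa using hw
  have hcont := continuousOn_sphere_of_harmonic hf hR
  have hPw := continuousOn_poissonKernel_sphere hw
  have hPw' := continuousOn_poissonKernel_sphere hw'
  have hle := circleAverage_mul_le_circleAverage_mul
    (K := fun ζ => (poissonKernel 0 w ζ + poissonKernel 0 (-w) ζ) / 2)
    (L := fun _ => (R ^ 2 - ‖w‖ ^ 2) / (R ^ 2 + ‖w‖ ^ 2))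
    ((hPw.add hPw').div_const 2) continuousOn_const hcont
    (fun ζ hζ => le_poissonKernel_add_poissonKernel_neg hw (by rwa [abs_of_pos hR] at hζ))
    (fun ζ hζ => hneg ζ (by rwa [abs_of_pos hR] at hζ))
  rw [← circleAverage_eq_center hf hR, ← hf.circleAverage_poissonKernel_smul hw,
    ← hf.circleAverage_poissonKernel_smul hw', ← smul_eq_mul (_ / _), ← circleAverage_fun_smul,
    smul_eq_mul (poissonKernel 0 w), smul_eq_mul (poissonKernel 0 (-w)),
    ← circleAverage_add (hPw.mul hcont).circleIntegrable' (hPw'.mul hcont).circleIntegrable',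
    div_eq_inv_mul, ← smul_eq_mul 2⁻¹, ← circleAverage_smul]
  refine le_trans (le_of_eq ?_) hle
  congr 1
  ext ζ
  simp only [Pi.smul_apply, Pi.add_apply, Pi.mul_apply, smul_eq_mul]
  ring

lemma add_neg_le_mul_of_harmonic_nonpos (hf : HarmonicOnNhd f (ball 0 1))
    (hneg : ∀ ζ ∈ ball (0 : ℂ) 1, f ζ ≤ 0) {w z : ℂ} (hw : w ∈ ball 0 1) (hz : z ∈ ball 0 1) :
    (f w + f (-w)) / 2 ≤
      (1 - ‖w‖ ^ 2) / (1 + ‖w‖ ^ 2) * ((1 - ‖z‖) / (1 + ‖z‖)) * f z := by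
  rw [mem_ball_zero_iff] at hw hz
  have hradius : ∀ R ∈ Ioo (max ‖w‖ ‖z‖) 1, (f w + f (-w)) / 2 ≤
      (R ^ 2 - ‖w‖ ^ 2) / (R ^ 2 + ‖w‖ ^ 2) * ((R - ‖z‖) / (R + ‖z‖)) * f z := by
    rintro R ⟨hR, hR1⟩
    obtain ⟨hwR, hzR⟩ := max_lt_iff.1 hR
    have hsub : closedBall (0 : ℂ) R ⊆ ball 0 1 := closedBall_subset_ball hR1
    have hf' : HarmonicOnNhd f (closedBall 0 R) := fun ζ hζ => hf ζ (hsub hζ)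
    have hneg' : ∀ ζ ∈ sphere (0 : ℂ) R, f ζ ≤ 0 :=
      fun ζ hζ => hneg ζ (hsub (sphere_subset_closedBall hζ))
    have hcenter := mul_center_le_of_harmonic_nonpos hf' hneg' (mem_ball_zero_iff.2 hzR)
    have hzR' : 0 < R - ‖z‖ := sub_pos.2 hzR
    have hRz : 0 < R + ‖z‖ := by linarith [norm_nonneg z]
    rw [div_mul_eq_mul_div, div_le_iff₀ hzR', mul_comm, ← le_div_iff₀ hRz, mul_comm (f z),
      mul_div_right_comm] at hcenter
    refine (add_neg_le_mul_center_of_harmonic_nonpos hf' hneg' (mem_ball_zero_iff.2 hwR)).trans ?_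
    rw [mul_assoc]
    have hnum : 0 ≤ R ^ 2 - ‖w‖ ^ 2 := by nlinarith [norm_nonneg w]
    exact mul_le_mul_of_nonneg_left hcenter (by positivity)
  have hlim : Filter.Tendsto
      (fun R : ℝ => (R ^ 2 - ‖w‖ ^ 2) / (R ^ 2 + ‖w‖ ^ 2) * ((R - ‖z‖) / (R + ‖z‖)) * f z)
      (nhdsWithin 1 (Iio 1))
      (nhds ((1 ^ 2 - ‖w‖ ^ 2) / (1 ^ 2 + ‖w‖ ^ 2) * ((1 - ‖z‖) / (1 + ‖z‖)) * f z)) := by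
    refine Filter.Tendsto.mono_left (ContinuousAt.tendsto ?_) nhdsWithin_le_nhds
    have h1 : (1 : ℝ) ^ 2 + ‖w‖ ^ 2 ≠ 0 := by positivity
    have h2 : 1 + ‖z‖ ≠ 0 := by positivity
    fun_prop (disch := assumption)
  rw [one_pow] at hlim
  refine ge_of_tendsto hlim ?_
  filter_upwards [Ioo_mem_nhdsLT (max_lt hw hz)] with R hR using hradius R hR

-- Averaging over `±w` improves the Harnack factor `(1 - ‖w‖) / (1 + ‖w‖)` at `w`.
lemma log_norm_add_log_norm_neg_le {U : ℂ → ℂ} (hU : DiffContOnCl ℂ U (ball 0 1))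
    (hne : ∀ ζ ∈ ball (0 : ℂ) 1, U ζ ≠ 0) (hle : ∀ ζ ∈ sphere (0 : ℂ) 1, ‖U ζ‖ ≤ 1)
    {w z : ℂ} (hw : w ∈ ball 0 1) (hz : z ∈ ball 0 1) :
    (log ‖U w‖ + log ‖U (-w)‖) / 2 ≤
      (1 - ‖w‖ ^ 2) / (1 + ‖w‖ ^ 2) * ((1 - ‖z‖) / (1 + ‖z‖)) * log ‖U z‖ := by
  have hball : ∀ ζ ∈ ball (0 : ℂ) 1, ‖U ζ‖ ≤ 1 := fun ζ hζ =>
    Complex.norm_le_of_forall_mem_frontier_norm_le isBounded_ball hU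
      (by rwa [frontier_ball _ one_ne_zero]) (subset_closure hζ)
  exact add_neg_le_mul_of_harmonic_nonpos (f := fun ζ => log ‖U ζ‖)
    (fun ζ hζ => ((hU.differentiableOn.analyticAt (isOpen_ball.mem_nhds hζ))).harmonicAt_log_norm
      (hne ζ hζ))
    (fun ζ hζ => log_nonpos (norm_nonneg _) (hball ζ hζ)) hw hz

end Harnack

/-! ### Zero-free representatives on the disc -/

section OuterLift

open Metric

/-- `G` is an entire function without zeros in the open unit disc whose modulus on the unit circle
is that of `h (Re ζ)`: up to a Blaschke product, a holomorphic version of `ζ ↦ h (Re ζ)`. -/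
structure IsOuterLift (h : ℝ → ℝ) (G : ℂ → ℂ) : Prop where
  differentiable : Differentiable ℂ G
  ne_zero : ∀ ζ ∈ ball (0 : ℂ) 1, G ζ ≠ 0
  norm_eq : ∀ ζ ∈ sphere (0 : ℂ) 1, ‖G ζ‖ = |h ζ.re|

lemma IsOuterLift.mul {h₁ h₂ : ℝ → ℝ} {G₁ G₂ : ℂ → ℂ} (hG₁ : IsOuterLift h₁ G₁)
    (hG₂ : IsOuterLift h₂ G₂) : IsOuterLift (fun x => h₁ x * h₂ x) (fun ζ => G₁ ζ * G₂ ζ) where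
  differentiable := hG₁.differentiable.mul hG₂.differentiable
  ne_zero ζ hζ := mul_ne_zero (hG₁.ne_zero ζ hζ) (hG₂.ne_zero ζ hζ)
  norm_eq ζ hζ := by rw [norm_mul, hG₁.norm_eq ζ hζ, hG₂.norm_eq ζ hζ, abs_mul]

lemma re_sq_add_im_sq_eq_one {ζ : ℂ} (hζ : ζ ∈ sphere (0 : ℂ) 1) : ζ.re ^ 2 + ζ.im ^ 2 = 1 := by
  rw [← Complex.normSq_add_mul_I, Complex.re_add_im, Complex.normSq_eq_norm_sq,
    mem_sphere_zero_iff_norm.1 hζ, one_pow]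

lemma re_sq_add_im_sq_lt_one {ζ : ℂ} (hζ : ζ ∈ ball (0 : ℂ) 1) : ζ.re ^ 2 + ζ.im ^ 2 < 1 := by
  rw [← Complex.normSq_add_mul_I, Complex.re_add_im, Complex.normSq_eq_norm_sq]
  exact pow_lt_one₀ (norm_nonneg _) (mem_ball_zero_iff.1 hζ) two_ne_zero

lemma palindromic_quadratic_ne_zero {A B : ℝ} (hA : 0 < A) (hB : |B| ≤ 2 * A) {ζ : ℂ}
    (hζ : ζ ∈ ball (0 : ℂ) 1) : (A : ℂ) - B * ζ + A * ζ ^ 2 ≠ 0 := by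
  intro h
  have hre := congrArg Complex.re h
  have him := congrArg Complex.im h
  simp only [pow_two, Complex.add_re, Complex.sub_re, Complex.mul_re, Complex.ofReal_re,
    Complex.ofReal_im, Complex.add_im, Complex.sub_im, Complex.mul_im, Complex.zero_re,
    Complex.zero_im] at hre him
  have hlt := re_sq_add_im_sq_lt_one hζ
  obtain ⟨hB1, hB2⟩ := abs_le.1 hB
  set x := ζ.re
  set y := ζ.im
  rcases mul_eq_zero.1 (show y * (2 * A * x - B) = 0 by linarith) with hy | hx
  · rw [hy] at hre hlt
    have hminus : 0 < A * (1 - x) ^ 2 := mul_pos hA (by nlinarith)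
    have hplus : 0 < A * (1 + x) ^ 2 := mul_pos hA (by nlinarith)
    rcases le_total 0 x with hx | hx
    · nlinarith [mul_le_mul_of_nonneg_right hB2 hx]
    · nlinarith [mul_le_mul_of_nonpos_right hB1 hx]
  · obtain rfl : B = 2 * A * x := by linarith
    nlinarith [mul_pos hA (sub_pos.2 hlt)]

variable {a k v η : ℝ}

/-- The palindromic polynomial with `slitLift a v ζ = ζ * (1 - v * (1 - a * Re ζ))` on the unit
circle. -/
noncomputable def slitLift (a v : ℝ) (ζ : ℂ) : ℂ :=
  ((v * a / 2 : ℝ) : ℂ) - ((v - 1 : ℝ) : ℂ) * ζ + ((v * a / 2 : ℝ) : ℂ) * ζ ^ 2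

lemma isOuterLift_slitLift (ha : 0 < a) (hv : 0 < v) (hslit : |v - 1| ≤ v * a) :
    IsOuterLift (fun x => 1 - v * (1 - a * x)) (slitLift a v) where
  differentiable := by unfold slitLift; fun_prop
  ne_zero _ hζ := palindromic_quadratic_ne_zero (by positivity) (by linarith) hζ
  norm_eq ζ hζ := by
    have hn := re_sq_add_im_sq_eq_one hζ
    have hfactor : slitLift a v ζ = ζ * ((1 - v * (1 - a * ζ.re) : ℝ) : ℂ) := by
      apply Complex.ext
      · simp only [slitLift, pow_two, Complex.add_re, Complex.sub_re, Complex.mul_re,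
          Complex.ofReal_re, Complex.ofReal_im]
        linear_combination -(v * a / 2) * hn
      · simp only [slitLift, pow_two, Complex.add_im, Complex.sub_im, Complex.mul_im,
          Complex.ofReal_re, Complex.ofReal_im, Complex.mul_re]
        ring
    rw [hfactor, norm_mul, mem_sphere_zero_iff_norm.1 hζ, one_mul, Complex.norm_real,
      Real.norm_eq_abs]

lemma norm_slitLift_sq (hη : 2 * k * η = a * (1 - k ^ 2)) {κ : ℝ} (hκ : κ ^ 2 = k ^ 2) :
    ‖slitLift a v (κ * Complex.I)‖ ^ 2 = k ^ 2 * ((1 - v) ^ 2 + v ^ 2 * η ^ 2) := by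
  have hcart : slitLift a v (κ * Complex.I) =
      ((v * a / 2 * (1 - k ^ 2) : ℝ) : ℂ) + ((-(v - 1) * κ : ℝ) : ℂ) * Complex.I := by
    rw [← hκ]
    simp only [slitLift, mul_pow, Complex.I_sq]
    push_cast
    ring
  rw [hcart, ← Complex.normSq_eq_norm_sq, Complex.normSq_add_mul_I]
  linear_combination (v - 1) ^ 2 * hκ - v ^ 2 / 4 * (2 * k * η + a * (1 - k ^ 2)) * hη

lemma log_norm_slitLift_add (hk : 0 < k) (hη₀ : 0 < η) (hv : 0 < v)
    (hη : 2 * k * η = a * (1 - k ^ 2)) :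
    log ‖slitLift a v (k * Complex.I)‖ + log ‖slitLift a v (-(k * Complex.I))‖ =
      2 * log k + log ((1 - v) ^ 2 + v ^ 2 * η ^ 2) := by
  have hsq := norm_slitLift_sq (v := v) hη rfl
  have hsq' := norm_slitLift_sq (v := v) hη (neg_sq k)
  rw [Complex.ofReal_neg, neg_mul] at hsq'
  have hlog := congrArg log hsq
  have hlog' := congrArg log hsq'
  rw [log_mul (by positivity) (by positivity), log_pow, log_pow] at hlog hlog'
  push_cast at hlog hlog'
  linarith

lemma slitLift_ofReal {z : ℝ} (ha : a * (1 + z ^ 2) = 2 * z) : slitLift a v z = z := by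
  have ha' : (a : ℂ) * (1 + z ^ 2) = 2 * z := by exact_mod_cast ha
  simp only [slitLift]
  push_cast
  linear_combination (v : ℂ) / 2 * ha'

/-- The square of a linear polynomial with root `X⁻¹`, normalised so that its modulus on the unit
circle is `|1 - v * (1 - a * Re ζ)|` when `X` and `X⁻¹` are the roots of `slitLift a v`. -/
noncomputable def reflectedLift (a v X : ℝ) (ζ : ℂ) : ℂ :=
  ((v * a / (2 * |X|) : ℝ) : ℂ) * (1 - X * ζ) ^ 2

variable {X : ℝ}

lemma isOuterLift_reflectedLift (ha : 0 < a) (hv : 0 < v) (hX₀ : X ≠ 0) (hX₁ : |X| < 1)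
    (hroot : v * a * (1 + X ^ 2) = 2 * (v - 1) * X) :
    IsOuterLift (fun x => 1 - v * (1 - a * x)) (reflectedLift a v X) where
  differentiable := by unfold reflectedLift; fun_prop
  ne_zero ζ hζ := by
    have hlt : ‖(X : ℂ) * ζ‖ < 1 := by
      rw [norm_mul, Complex.norm_real]
      exact mul_lt_one_of_nonneg_of_lt_one_left (norm_nonneg _) hX₁ (mem_ball_zero_iff.1 hζ).le
    have hne : (1 : ℂ) - X * ζ ≠ 0 := fun h => by
      rw [← sub_eq_zero.1 h, norm_one] at hlt
      exact lt_irrefl _ hlt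
    have hcoeff : v * a / (2 * |X|) ≠ 0 := by positivity
    exact mul_ne_zero (Complex.ofReal_ne_zero.2 hcoeff) (pow_ne_zero _ hne)
  norm_eq ζ hζ := by
    have hn := re_sq_add_im_sq_eq_one hζ
    have hsq : ‖(1 : ℂ) - X * ζ‖ ^ 2 = 1 + X ^ 2 - 2 * X * ζ.re := by
      rw [← Complex.normSq_eq_norm_sq, Complex.normSq_apply]
      simp only [Complex.sub_re, Complex.sub_im, Complex.one_re, Complex.one_im, Complex.mul_re,
        Complex.mul_im, Complex.ofReal_re, Complex.ofReal_im]
      linear_combination X ^ 2 * hn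
    have hnonneg : 0 ≤ 1 + X ^ 2 - 2 * X * ζ.re := hsq ▸ sq_nonneg _
    have habs := congrArg abs (show X * (1 - v * (1 - a * ζ.re)) =
      -(v * a / 2 * (1 + X ^ 2 - 2 * X * ζ.re)) by linear_combination 1 / 2 * hroot)
    rw [abs_neg, abs_mul, abs_of_nonneg (mul_nonneg (by positivity) hnonneg)] at habs
    have hX : 0 < |X| := abs_pos.2 hX₀
    rw [reflectedLift, norm_mul, norm_pow, hsq, Complex.norm_real, Real.norm_eq_abs,
      abs_of_nonneg (show 0 ≤ v * a / (2 * |X|) by positivity), ← mul_right_inj' hX.ne', habs]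
    field_simp

lemma norm_reflectedLift_mul_I (ha : 0 < a) (hv : 0 < v) {κ : ℝ} (hκ : κ ^ 2 = k ^ 2) :
    ‖reflectedLift a v X (κ * Complex.I)‖ = v * a / (2 * |X|) * (1 + k ^ 2 * X ^ 2) := by
  have hcart : (1 : ℂ) - X * (κ * Complex.I) = (1 : ℝ) + ((-(X * κ) : ℝ) : ℂ) * Complex.I := by
    push_cast
    ring
  rw [reflectedLift, norm_mul, norm_pow, hcart, ← Complex.normSq_eq_norm_sq,
    Complex.normSq_add_mul_I, Complex.norm_real, Real.norm_eq_abs, abs_of_nonneg (by positivity)]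
  linear_combination v * a / (2 * |X|) * X ^ 2 * hκ

lemma log_norm_reflectedLift_add (ha : 0 < a) (hv : 0 < v) (hk : 0 < k) (hX₀ : X ≠ 0)
    (hroot : v * a * (1 + X ^ 2) = 2 * (v - 1) * X) (hη : 2 * k * η = a * (1 - k ^ 2)) :
    log ‖reflectedLift a v X (k * Complex.I)‖ + log ‖reflectedLift a v X (-(k * Complex.I))‖ +
        log ((k ^ 2 + X ^ 2) / (k ^ 2 * (1 + k ^ 2 * X ^ 2))) =
      log ((1 - v) ^ 2 + v ^ 2 * η ^ 2) := by
  have hnorm := norm_reflectedLift_mul_I (X := X) ha hv (neg_sq k)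
  rw [Complex.ofReal_neg, neg_mul] at hnorm
  have : 0 < |X| := abs_pos.2 hX₀
  rw [norm_reflectedLift_mul_I ha hv rfl, hnorm, ← log_mul (by positivity) (by positivity),
    ← log_mul (by positivity) (by positivity)]
  congr 1
  have h1 : X ^ 2 * (1 - v) ^ 2 = v ^ 2 * a ^ 2 / 4 * (1 + X ^ 2) ^ 2 := by
    linear_combination -(1 / 4) * (v * a * (1 + X ^ 2) + 2 * (v - 1) * X) * hroot
  have h2 : k ^ 2 * η ^ 2 = a ^ 2 * (1 - k ^ 2) ^ 2 / 4 := by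
    linear_combination 1 / 4 * (2 * k * η + a * (1 - k ^ 2)) * hη
  have hX2 := sq_abs X
  field_simp
  rw [hX2]
  linear_combination -4 * k ^ 2 * h1 - 4 * v ^ 2 * X ^ 2 * h2

lemma norm_reflectedLift_ofReal {z : ℝ} (ha₀ : 0 < a) (hv : 0 < v) (hz : 0 < z)
    (ha : a * (1 + z ^ 2) = 2 * z) (hX₀ : X ≠ 0) (hX : 0 < 1 - X * z)
    (hroot : v * a * (1 + X ^ 2) = 2 * (v - 1) * X) :
    ‖reflectedLift a v X z‖ = z * (1 - X * z) / |X - z| := by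
  have hXv : v * ((X - z) * (1 - X * z)) = (1 + z ^ 2) * X := by
    linear_combination (1 + z ^ 2) / 2 * (-hroot) + v * (1 + X ^ 2) / 2 * ha
  have habs := congrArg abs hXv
  rw [abs_mul, abs_mul, abs_mul, abs_of_pos hv, abs_of_pos hX,
    abs_of_pos (show 0 < 1 + z ^ 2 by positivity)] at habs
  have hXz : 0 < |X - z| := by
    refine abs_pos.2 fun h => ?_
    rw [h, abs_zero, zero_mul, mul_zero, eq_comm, mul_eq_zero] at habs
    rcases habs with h' | h'
    · exact absurd h' (by positivity)
    · exact hX₀ (abs_eq_zero.1 h')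
  have : 0 < |X| := abs_pos.2 hX₀
  have hreal : reflectedLift a v X z = ((v * a / (2 * |X|) * (1 - X * z) ^ 2 : ℝ) : ℂ) := by
    simp only [reflectedLift]
    push_cast
    rfl
  rw [hreal, Complex.norm_real, Real.norm_eq_abs, abs_of_nonneg (by positivity)]
  field_simp
  have hz2 : 0 < 1 + z ^ 2 := by positivity
  refine mul_right_cancel₀ hz2.ne' ?_
  linear_combination v * (1 - X * z) * |X - z| * ha + 2 * z * habs

lemma exists_sq_add_one_eq {t : ℝ} (ht : 1 < t) :
    ∃ X : ℝ, 0 < X ∧ X < 1 ∧ X ^ 2 + 1 = 2 * t * X := by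
  have hdisc : 0 < t ^ 2 - 1 := by nlinarith
  have hsq := Real.sq_sqrt hdisc.le
  have hsqrt := Real.sqrt_pos.2 hdisc
  exact ⟨t - √(t ^ 2 - 1), by nlinarith, by nlinarith, by nlinarith⟩

lemma exists_slitLift_root (ha : 0 < a) (hv : 0 < v) (hslit : v * a < |v - 1|) :
    ∃ X : ℝ, X ≠ 0 ∧ |X| < 1 ∧ v * a * (1 + X ^ 2) = 2 * (v - 1) * X := by
  have hva : 0 < v * a := mul_pos hv ha
  rcases lt_abs.1 hslit with h | h
  · obtain ⟨X, hX₀, hX₁, hX⟩ := exists_sq_add_one_eq ((one_lt_div hva).2 h)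
    refine ⟨X, hX₀.ne', by rwa [abs_of_pos hX₀], ?_⟩
    rw [add_comm, hX]
    field_simp
  · obtain ⟨X, hX₀, hX₁, hX⟩ := exists_sq_add_one_eq ((one_lt_div hva).2 h)
    refine ⟨-X, neg_ne_zero.2 hX₀.ne', by rwa [abs_neg, abs_of_pos hX₀], ?_⟩
    rw [neg_sq, add_comm, hX]
    field_simp

variable {θ c z : ℝ}

/-- The map `ζ ↦ 1 - a * (ζ + ζ⁻¹) / 2`, which is `1 - a * Re ζ` on the unit circle, takes the
points `z` and `k * I` of the unit disc to `0` and `1 + η * I`. -/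
structure IsJoukowskyPair (a k η z : ℝ) : Prop where
  k_mem : k ∈ Ioo (0 : ℝ) 1
  z_mem : z ∈ Ioo (0 : ℝ) 1
  map_z : a * (1 + z ^ 2) = 2 * z
  map_k : 2 * k * η = a * (1 - k ^ 2)

namespace IsJoukowskyPair

variable (h : IsJoukowskyPair a k η z)
include h

lemma a_pos : 0 < a :=
  pos_of_mul_pos_left (h.map_z ▸ mul_pos two_pos h.z_mem.1) (by positivity)

lemma a_le_one : a ≤ 1 := by
  nlinarith [h.map_z, sq_nonneg (1 - z), sq_nonneg z]

lemma η_pos : 0 < η := by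
  obtain ⟨hk, hk₁⟩ := h.k_mem
  have hmul : 0 < 2 * k * η := h.map_k ▸ mul_pos h.a_pos (by nlinarith)
  exact pos_of_mul_pos_right hmul (by positivity)

lemma k_mul_I_mem : (k * Complex.I : ℂ) ∈ ball (0 : ℂ) 1 := by
  rw [mem_ball_zero_iff, norm_mul, Complex.norm_I, mul_one, Complex.norm_real, Real.norm_eq_abs,
    abs_of_pos h.k_mem.1]
  exact h.k_mem.2

lemma neg_k_mul_I_mem : (-(k * Complex.I) : ℂ) ∈ ball (0 : ℂ) 1 := by
  rw [mem_ball_zero_iff, norm_neg]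
  exact mem_ball_zero_iff.1 h.k_mul_I_mem

lemma ofReal_z_mem : (z : ℂ) ∈ ball (0 : ℂ) 1 := by
  rw [mem_ball_zero_iff, Complex.norm_real, Real.norm_eq_abs, abs_of_pos h.z_mem.1]
  exact h.z_mem.2

end IsJoukowskyPair

/-- The price of replacing the factor `1 - v * (1 - a * Re ζ)`, whose root is tied to `v` by `X`, by
its zero-free representative: the loss at `k * I`, offset with weight `θ` by the value at `z`, is at
most `c * η * v`. The value `X = -1` covers all factors with a root in the slit. -/
def ReflectionBound (a k η θ c z : ℝ) : Prop :=
  ∀ ⦃X v : ℝ⦄, 0 < v → X ≠ 0 → |X| ≤ 1 → v * a * (1 + X ^ 2) = 2 * (v - 1) * X →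
    log ((k ^ 2 + X ^ 2) / (k ^ 2 * (1 + k ^ 2 * X ^ 2))) / 2 +
      θ * log (z * (1 - X * z) / |X - z|) ≤ c * η * v

namespace ReflectionBound

variable (hb : ReflectionBound a k η θ c z) (h : IsJoukowskyPair a k η z)
include hb h

lemma neg_log_add_le : -log k + θ * log z ≤ c * η * (1 + a)⁻¹ := by
  have ha := h.a_pos
  have hk := h.k_mem.1
  have hz := h.z_mem.1
  have hbound := @hb (-1) (1 + a)⁻¹ (by positivity) (by norm_num) (by norm_num)
    (by field_simp; ring)
  have hW : (k ^ 2 + (-1) ^ 2) / (k ^ 2 * (1 + k ^ 2 * (-1) ^ 2)) = (k ^ 2)⁻¹ := by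
    field_simp
    ring
  have hG : z * (1 - -1 * z) / |-1 - z| = z := by
    rw [show -1 - z = -(1 + z) by ring, abs_neg, abs_of_pos (by positivity)]
    field_simp
    ring
  rw [hW, hG, Real.log_inv, Real.log_pow] at hbound
  push_cast at hbound
  linarith

lemma exists_isOuterLift (hc : 0 < c) (hv : 0 < v) :
    ∃ G, IsOuterLift (fun x => 1 - v * (1 - a * x)) G ∧
      log ((1 - v) ^ 2 + v ^ 2 * η ^ 2) ≤ 2 * (c * η * v) +
        (log ‖G (k * Complex.I)‖ + log ‖G (-(k * Complex.I))‖) - 2 * θ * log ‖G z‖ := by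
  have ha := h.a_pos
  have hη := h.η_pos
  obtain ⟨hz, hz₁⟩ := h.z_mem
  rcases le_or_gt |v - 1| (v * a) with hslit | hslit
  · refine ⟨slitLift a v, isOuterLift_slitLift ha hv hslit, ?_⟩
    have hinv : (1 + a)⁻¹ ≤ v := by
      rw [inv_le_iff_one_le_mul₀ (by positivity)]
      linarith [neg_le_of_abs_le hslit]
    have hmul := mul_le_mul_of_nonneg_left hinv (mul_pos hc hη).le
    rw [log_norm_slitLift_add h.k_mem.1 hη hv h.map_k, slitLift_ofReal h.map_z, Complex.norm_real,
      Real.norm_eq_abs, abs_of_pos hz]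
    linarith [hb.neg_log_add_le h]
  · obtain ⟨X, hX₀, hX₁, hroot⟩ := exists_slitLift_root ha hv hslit
    refine ⟨reflectedLift a v X, isOuterLift_reflectedLift ha hv hX₀ hX₁ hroot, ?_⟩
    have hXz : 0 < 1 - X * z := by nlinarith [le_of_abs_le hX₁.le]
    have hbound := hb hv hX₀ hX₁.le hroot
    have hsum := log_norm_reflectedLift_add ha hv h.k_mem.1 hX₀ hroot h.map_k
    rw [norm_reflectedLift_ofReal ha hv hz h.map_z hX₀ hXz hroot]
    linarith

lemma exists_isOuterLift_reciprocalProd (hc : 0 < c) {v : Multiset ℝ} (hv : ∀ x ∈ v, 0 < x) :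
    ∃ U, IsOuterLift (fun x => (reciprocalProd v).eval (1 - a * x)) U ∧
      log ((normSqProd v).eval (η ^ 2)) ≤ 2 * (c * η * v.sum) +
        (log ‖U (k * Complex.I)‖ + log ‖U (-(k * Complex.I))‖) - 2 * θ * log ‖U z‖ := by
  induction v using Multiset.induction with
  | empty =>
    refine ⟨fun _ => 1, ⟨differentiable_const 1, by simp, by simp [eval_reciprocalProd]⟩, ?_⟩
    simp [eval_normSqProd]
  | cons x v ih =>
    obtain ⟨hx, hv⟩ := Multiset.forall_mem_cons.1 hv
    obtain ⟨U, hU, hUle⟩ := ih hv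
    obtain ⟨G, hG, hGle⟩ := hb.exists_isOuterLift h hc hx
    have hη := h.η_pos
    refine ⟨fun ζ => G ζ * U ζ, by simpa [eval_reciprocalProd] using hG.mul hU, ?_⟩
    have hlog : ∀ ζ ∈ ball (0 : ℂ) 1, log ‖G ζ * U ζ‖ = log ‖G ζ‖ + log ‖U ζ‖ := fun ζ hζ => by
      rw [norm_mul, log_mul (norm_ne_zero_iff.2 (hG.ne_zero ζ hζ))
        (norm_ne_zero_iff.2 (hU.ne_zero ζ hζ))]
    have hcons : log ((normSqProd (x ::ₘ v)).eval (η ^ 2)) =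
        log ((1 - x) ^ 2 + x ^ 2 * η ^ 2) + log ((normSqProd v).eval (η ^ 2)) := by
      rw [← log_mul (by positivity) (eval_normSqProd_pos hv (by positivity)).ne', eval_normSqProd,
        eval_normSqProd, Multiset.map_cons, Multiset.prod_cons]
    rw [hlog _ h.k_mul_I_mem, hlog _ h.neg_k_mul_I_mem, hlog _ h.ofReal_z_mem, hcons,
      Multiset.sum_cons]
    linarith

-- The Harnack inequality makes the contributions of the representatives nonpositive.
lemma eval_normSqProd_le_exp (hθ : θ = (1 - k ^ 2) / (1 + k ^ 2) * ((1 - z) / (1 + z)))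
    (hc : 0 < c) {v : Multiset ℝ} (hv : ∀ x ∈ v, 0 < x)
    (hbound : ∀ w ∈ Icc (0 : ℝ) 2, |(reciprocalProd v).eval w| ≤ 1) :
    (normSqProd v).eval (η ^ 2) ≤ exp (2 * c * (η * v.sum)) := by
  obtain ⟨U, hU, hUle⟩ := hb.exists_isOuterLift_reciprocalProd h hc hv
  have hsphere : ∀ ζ ∈ sphere (0 : ℂ) 1, ‖U ζ‖ ≤ 1 := fun ζ hζ => by
    rw [hU.norm_eq ζ hζ]
    have hre := Complex.abs_re_le_norm ζ
    rw [mem_sphere_zero_iff_norm.1 hζ, abs_le] at hre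
    have ha := h.a_pos
    have ha₁ := h.a_le_one
    exact hbound _ ⟨by nlinarith, by nlinarith⟩
  have hharnack := log_norm_add_log_norm_neg_le hU.differentiable.diffContOnCl hU.ne_zero hsphere
    h.k_mul_I_mem h.ofReal_z_mem
  rw [norm_mul, Complex.norm_I, mul_one, Complex.norm_real, Complex.norm_real, norm_eq_abs,
    norm_eq_abs, abs_of_pos h.k_mem.1, abs_of_pos h.z_mem.1, ← hθ] at hharnack
  rw [← log_le_iff_le_exp (eval_normSqProd_pos hv (pow_pos h.η_pos 2))]
  linarith

end ReflectionBound

end OuterLift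
/-! ### Large total weight -/

section LargeSum

/-- A polynomial majorant of `(artanh T - artanh (T * t)) / T`, where `q = T ^ 2`. -/
noncomputable def artanhMajorant (q t : ℝ) : ℝ :=
  (1 - t) + q * ((1 - t ^ 3) / 3 + 2 / 15 * (1 - t ^ 5))

lemma hasDerivAt_half_log_sub_add_artanhMajorant {T t : ℝ} (hpos : 0 < 1 + T * t)
    (hneg : 0 < 1 - T * t) :
    HasDerivAt (fun t => (log (1 + T * t) - log (1 - T * t)) / 2 + T * artanhMajorant (T ^ 2) t)
      (T / (1 - T ^ 2 * t ^ 2) - T * (1 + T ^ 2 * t ^ 2 + 2 / 3 * T ^ 2 * t ^ 4)) t := by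
  have hid := hasDerivAt_id t
  have hadd : HasDerivAt (fun t => log (1 + T * t)) _ t :=
    ((hid.const_mul T).const_add 1).log hpos.ne'
  have hsub : HasDerivAt (fun t => log (1 - T * t)) _ t :=
    ((hid.const_mul T).const_sub 1).log hneg.ne'
  have hpoly : HasDerivAt (artanhMajorant (T ^ 2)) _ t :=
    (hid.const_sub 1).add (((((hid.pow 3).const_sub 1).div_const 3).add
      (((hid.pow 5).const_sub 1).const_mul (2 / 15))).const_mul (T ^ 2))
  refine (((hadd.sub hsub).div_const 2).add (hpoly.const_mul T)).congr_deriv ?_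
  have hquot : T / (1 - T ^ 2 * t ^ 2) = (T / (1 + T * t) + T / (1 - T * t)) / 2 := by
    rw [show 1 - T ^ 2 * t ^ 2 = (1 + T * t) * (1 - T * t) by ring]
    field_simp
    ring
  rw [hquot]
  simp only [id]
  push_cast
  ring

lemma half_log_sub_le_artanhMajorant {T t : ℝ} (hT : 0 < T) (hT₂ : T ^ 2 ≤ 2 / 5) (ht : 0 ≤ t)
    (ht₁ : t ≤ 1) :
    (log (1 + T) - log (1 - T)) / 2 - (log (1 + T * t) - log (1 - T * t)) / 2 ≤
      T * artanhMajorant (T ^ 2) t := by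
  have hT₁ : T < 1 := by nlinarith
  have hderiv : ∀ x ∈ Icc (0 : ℝ) 1, HasDerivAt _ _ x := fun x hx =>
    hasDerivAt_half_log_sub_add_artanhMajorant (T := T) (t := x)
      (by nlinarith [mul_nonneg hT.le hx.1]) (by nlinarith [mul_le_mul_of_nonneg_left hx.2 hT.le])
  have hanti := antitoneOn_of_hasDerivWithinAt_nonpos (convex_Icc (0 : ℝ) 1)
    (fun x hx => (hderiv x hx).continuousAt.continuousWithinAt)
    (fun x hx => (hderiv x (interior_subset hx)).hasDerivWithinAt) fun x hx => ?_
  · have hle := hanti ⟨ht, ht₁⟩ (right_mem_Icc.2 zero_le_one) ht₁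
    simp only [artanhMajorant, one_pow, sub_self, mul_zero, add_zero, zero_div, mul_one] at hle ⊢
    linarith
  · obtain ⟨hx, hx₁⟩ := interior_subset hx
    have hx2 : x ^ 2 ≤ 1 := pow_le_one₀ hx hx₁
    have hden : 3 / 5 ≤ 1 - T ^ 2 * x ^ 2 := by nlinarith [sq_nonneg x]
    have : (1 - T ^ 2 * x ^ 2) * (T * (1 + T ^ 2 * x ^ 2 + 2 / 3 * T ^ 2 * x ^ 4)) - T =
        T ^ 3 * x ^ 4 * (2 / 3 * (1 - T ^ 2 * x ^ 2) - T ^ 2) := by ring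
    have hnonneg : 0 ≤ T ^ 3 * x ^ 4 * (2 / 3 * (1 - T ^ 2 * x ^ 2) - T ^ 2) :=
      mul_nonneg (by positivity) (by linarith)
    rw [sub_nonpos, div_le_iff₀ (by linarith)]
    linarith

lemma log_quotient_le_artanhMajorant {k X T : ℝ} (hk : 0 < k) (hT : 0 < T)
    (hkT : T * (1 + k ^ 2) = 1 - k ^ 2) (hT₂ : T ^ 2 ≤ 2 / 5) (hX : |X| ≤ 1) :
    log ((k ^ 2 + X ^ 2) / (k ^ 2 * (1 + k ^ 2 * X ^ 2))) / 2 ≤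
      T * artanhMajorant (T ^ 2) ((1 - X ^ 2) / (1 + X ^ 2)) := by
  set t := (1 - X ^ 2) / (1 + X ^ 2) with ht
  have hX2 : X ^ 2 ≤ 1 := (sq_le_one_iff_abs_le_one X).2 hX
  have ht₀ : 0 ≤ t := div_nonneg (by linarith) (by positivity)
  have ht₁ : t ≤ 1 := (div_le_one (by positivity)).2 (by linarith [sq_nonneg X])
  refine le_trans (le_of_eq ?_) (half_log_sub_le_artanhMajorant hT hT₂ ht₀ ht₁)
  have hT_eq : T = (1 - k ^ 2) / (1 + k ^ 2) := (eq_div_iff (by positivity)).2 hkT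
  have hadd : 1 + T = 2 / (1 + k ^ 2) := by rw [hT_eq]; field_simp; ring
  have hsub : 1 - T = 2 * k ^ 2 / (1 + k ^ 2) := by rw [hT_eq]; field_simp; ring
  have hadd' : 1 + T * t = 2 * (1 + k ^ 2 * X ^ 2) / ((1 + k ^ 2) * (1 + X ^ 2)) := by
    rw [hT_eq, ht]; field_simp; ring
  have hsub' : 1 - T * t = 2 * (k ^ 2 + X ^ 2) / ((1 + k ^ 2) * (1 + X ^ 2)) := by
    rw [hT_eq, ht]; field_simp; ring
  have hquot : (k ^ 2 + X ^ 2) / (k ^ 2 * (1 + k ^ 2 * X ^ 2)) =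
      (1 + T) / (1 - T) / ((1 + T * t) / (1 - T * t)) := by
    rw [hadd, hsub, hadd', hsub']; field_simp
  have hsub_pos : 0 < 1 - T := by rw [hsub]; positivity
  have hsub'_pos : 0 < 1 - T * t := by rw [hsub']; positivity
  rw [hquot, log_div (by positivity) (by positivity), log_div (by positivity) hsub_pos.ne',
    log_div (by positivity) hsub'_pos.ne']
  ring

/-- The tangent to the nonlinear part of `artanhMajorant` at `t₀`, where `t = (1 - x²) / (1 + x²)`,
multiplied by `1 + x²`. -/
noncomputable def artanhTangent (t₀ x : ℝ) : ℝ :=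
  ((1 + 2 * t₀ ^ 3) / 3 + 2 / 15 * (1 + 4 * t₀ ^ 5)) * (1 + x ^ 2) -
    (t₀ ^ 2 + 2 / 3 * t₀ ^ 4) * (1 - x ^ 2)

lemma artanhMajorant_mul_le {q t₀ x : ℝ} (hq : 0 ≤ q) (ht₀ : 0 ≤ t₀) (hx : |x| ≤ 1) :
    artanhMajorant q ((1 - x ^ 2) / (1 + x ^ 2)) * (1 + x ^ 2) ≤
      2 * x ^ 2 + q * artanhTangent t₀ x := by
  set t := (1 - x ^ 2) / (1 + x ^ 2)
  have htx : t * (1 + x ^ 2) = 1 - x ^ 2 := div_mul_cancel₀ _ (by positivity)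
  have hx2 : x ^ 2 ≤ 1 := (sq_le_one_iff_abs_le_one x).2 hx
  have : 0 ≤ t := div_nonneg (by linarith) (by positivity)
  have hcube : 0 ≤ t ^ 3 - 3 * t₀ ^ 2 * t + 2 * t₀ ^ 3 := by
    rw [show t ^ 3 - 3 * t₀ ^ 2 * t + 2 * t₀ ^ 3 = (t - t₀) ^ 2 * (t + 2 * t₀) by ring]
    positivity
  have hquint : 0 ≤ t ^ 5 - 5 * t₀ ^ 4 * t + 4 * t₀ ^ 5 := by
    rw [show t ^ 5 - 5 * t₀ ^ 4 * t + 4 * t₀ ^ 5 =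
      (t - t₀) ^ 2 * (t ^ 3 + 2 * t₀ * t ^ 2 + 3 * t₀ ^ 2 * t + 4 * t₀ ^ 3) by ring]
    positivity
  have hsum : 0 ≤ q * (1 + x ^ 2) * ((t ^ 3 - 3 * t₀ ^ 2 * t + 2 * t₀ ^ 3) / 3 +
      2 / 15 * (t ^ 5 - 5 * t₀ ^ 4 * t + 4 * t₀ ^ 5)) := by positivity
  rw [artanhMajorant, artanhTangent, ← htx]
  linear_combination hsum - htx

lemma log_le_div_add {x y L : ℝ} (hx : 0 < x) (hy : 0 < y) (hL : log y ≤ L) :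
    log x ≤ x / y + (L - 1) := by
  have hlog := log_le_sub_one_of_pos (div_pos hx hy)
  rw [log_div hx.ne' hy.ne'] at hlog
  linarith

-- After clearing denominators the bound is linear in `q` and quartic in `x`.
lemma artanhMajorant_add_log_le {q t₀ x y L z ρ κ P P' : ℝ} (hq : 0 ≤ q) (ht₀ : 0 ≤ t₀)
    (hx : |x| ≤ 1) (hy : 0 < y) (hL : log y ≤ L) (hz : 0 < z) (hρ : 0 ≤ ρ) (hP : 0 < P)
    (hP' : 0 < P')
    (hpoly : (2 * x ^ 2 + q * artanhTangent t₀ x) * (P * P') +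
      ρ * (z / y * P' + (L - 1) * P) * P' * (1 + x ^ 2) ≤ κ * (1 + q / 2) * x * (1 + x ^ 2)) :
    artanhMajorant q ((1 - x ^ 2) / (1 + x ^ 2)) + ρ * log (z * P' / P) ≤
      κ * (1 + q / 2) * (x / (P * P')) := by
  have hD : 0 < (1 + x ^ 2) * (P * P') := by positivity
  have hlog := mul_le_mul_of_nonneg_left
    (log_le_div_add (show 0 < z * P' / P by positivity) hy hL) (mul_nonneg hρ hD.le)
  have hgap := mul_le_mul_of_nonneg_right (artanhMajorant_mul_le hq ht₀ hx) (mul_pos hP hP').le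
  have hclear : ρ * ((1 + x ^ 2) * (P * P')) * (z * P' / P / y + (L - 1)) =
      ρ * (z / y * P' + (L - 1) * P) * P' * (1 + x ^ 2) := by
    field_simp
  have hclear' : κ * (1 + q / 2) * (x / (P * P')) * ((1 + x ^ 2) * (P * P')) =
      κ * (1 + q / 2) * x * (1 + x ^ 2) := by
    field_simp
  refine le_of_mul_le_mul_right ?_ hD
  linarith

lemma mul_pow_mul_pow_nonneg {x l u b : ℝ} (hb : 0 ≤ b) (hx : x ∈ Icc l u) (i j : ℕ) :
    0 ≤ b * ((x - l) ^ i * (u - x) ^ j) :=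
  mul_nonneg hb (mul_nonneg (pow_nonneg (sub_nonneg.2 hx.1) i) (pow_nonneg (sub_nonneg.2 hx.2) j))

-- The breakpoints and tangency points below were found numerically: on each interval the polynomial
-- to be bounded has nonnegative Bernstein coefficients of degree four at `q = 0` and `q = 2 / 5`.
lemma reflection_cost_neg {q x : ℝ} (hq : q ∈ Icc (0 : ℝ) (2 / 5)) (hx : x ∈ Ioc (0 : ℝ) 1) :
    artanhMajorant q ((1 - x ^ 2) / (1 + x ^ 2)) +
        19 / 29 * log (5 / 24 * (1 + 5 / 24 * x) / (x + 5 / 24)) ≤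
      81 / 400 * (1 + q / 2) * (x / ((x + 5 / 24) * (1 + 5 / 24 * x))) := by
  obtain ⟨hx₀, hx₁⟩ := hx
  have habs : |x| ≤ 1 := abs_le.2 ⟨by linarith, hx₁⟩
  have hP : 0 < x + 5 / 24 := by positivity
  have hP' : 0 < 1 + 5 / 24 * x := by positivity
  have hq' := sub_nonneg.2 hq.2
  rcases le_total x (23 / 50) with hsmall | hlarge
  · refine artanhMajorant_add_log_le hq.1 zero_le_one habs one_pos log_one.le (by norm_num)
      (by norm_num) hP hP' ?_
    have hI : x ∈ Icc (0 : ℝ) (23 / 50) := ⟨hx₀.le, hsmall⟩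
    have h := mul_pow_mul_pow_nonneg hq.1 hI
    have h' := mul_pow_mul_pow_nonneg hq' hI
    rw [artanhTangent]
    linarith [h 0 4, h 1 3, h 2 2, h 3 1, h 4 0, h' 0 4, h' 1 3, h' 2 2, h' 3 1, h' 4 0]
  · have hlog : log (1 / 5) ≤ -1.6094 := by
      rw [one_div, log_inv]
      linarith [log_five_gt_d9]
    refine artanhMajorant_add_log_le hq.1 le_rfl habs (by norm_num) hlog (by norm_num)
      (by norm_num) hP hP' ?_
    have hI : x ∈ Icc (23 / 50 : ℝ) 1 := ⟨hlarge, hx₁⟩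
    have h := mul_pow_mul_pow_nonneg hq.1 hI
    have h' := mul_pow_mul_pow_nonneg hq' hI
    rw [artanhTangent]
    linarith [h 0 4, h 1 3, h 2 2, h 3 1, h 4 0, h' 0 4, h' 1 3, h' 2 2, h' 3 1, h' 4 0]

lemma reflection_cost_pos {q x : ℝ} (hq : q ∈ Icc (0 : ℝ) (2 / 5)) (hx : x ∈ Ioc (5 / 24 : ℝ) 1) :
    artanhMajorant q ((1 - x ^ 2) / (1 + x ^ 2)) +
        19 / 29 * log (5 / 24 * (1 - 5 / 24 * x) / (x - 5 / 24)) ≤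
      81 / 400 * (1 + q / 2) * (x / ((x - 5 / 24) * (1 - 5 / 24 * x))) := by
  obtain ⟨hx₀, hx₁⟩ := hx
  have habs : |x| ≤ 1 := abs_le.2 ⟨by linarith, hx₁⟩
  have hP : 0 < x - 5 / 24 := sub_pos.2 hx₀
  have hP' : 0 < 1 - 5 / 24 * x := by linarith
  have hq' := sub_nonneg.2 hq.2
  rcases le_total x (31 / 100) with hsmall | hx₂
  · have hlog : log 3 ≤ 1.0987 := by linarith [log_three_lt_d9]
    refine artanhMajorant_add_log_le (t₀ := 1 / 2) hq.1 (by norm_num) habs (by norm_num) hlog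
      (by norm_num) (by norm_num) hP hP' ?_
    have hI : x ∈ Icc (5 / 24 : ℝ) (31 / 100) := ⟨hx₀.le, hsmall⟩
    have h := mul_pow_mul_pow_nonneg hq.1 hI
    have h' := mul_pow_mul_pow_nonneg hq' hI
    rw [artanhTangent]
    linarith [h 0 4, h 1 3, h 2 2, h 3 1, h 4 0, h' 0 4, h' 1 3, h' 2 2, h' 3 1, h' 4 0]
  rcases le_total x (14 / 25) with hmid | hlarge
  · have hlog : log (4 / 3) ≤ 0.2877 := by
      rw [log_div (by norm_num) (by norm_num), show (4 : ℝ) = 2 ^ 2 by norm_num, log_pow]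
      push_cast
      linarith [log_two_lt_d9, log_three_gt_d9]
    refine artanhMajorant_add_log_le (t₀ := 1 / 2) hq.1 (by norm_num) habs (by norm_num) hlog
      (by norm_num) (by norm_num) hP hP' ?_
    have hI : x ∈ Icc (31 / 100 : ℝ) (14 / 25) := ⟨hx₂, hmid⟩
    have h := mul_pow_mul_pow_nonneg hq.1 hI
    have h' := mul_pow_mul_pow_nonneg hq' hI
    rw [artanhTangent]
    linarith [h 0 4, h 1 3, h 2 2, h 3 1, h 4 0, h' 0 4, h' 1 3, h' 2 2, h' 3 1, h' 4 0]
  · have hlog : log (3 / 10) ≤ -1.2039 := by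
      rw [log_div (by norm_num) (by norm_num), show (10 : ℝ) = 2 * 5 by norm_num,
        log_mul (by norm_num) (by norm_num)]
      linarith [log_two_gt_d9, log_three_lt_d9, log_five_gt_d9]
    refine artanhMajorant_add_log_le hq.1 le_rfl habs (by norm_num) hlog
      (by norm_num) (by norm_num) hP hP' ?_
    have hI : x ∈ Icc (14 / 25 : ℝ) 1 := ⟨hlarge, hx₁⟩
    have h := mul_pow_mul_pow_nonneg hq.1 hI
    have h' := mul_pow_mul_pow_nonneg hq' hI
    rw [artanhTangent]
    linarith [h 0 4, h 1 3, h 2 2, h 3 1, h 4 0, h' 0 4, h' 1 3, h' 2 2, h' 3 1, h' 4 0]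

variable {a k η z : ℝ}

lemma exists_isJoukowskyPair (hη : 0 < η) (hz : z ∈ Ioo (0 : ℝ) 1) :
    ∃ k, IsJoukowskyPair (2 * z / (1 + z ^ 2)) k η z := by
  have hz₀ := hz.1
  set h := η / (2 * z / (1 + z ^ 2)) with hh
  have hpos : 0 < h := by positivity
  have hsq := sq_sqrt (show 0 ≤ 1 + h ^ 2 by positivity)
  have hsqrt := sqrt_nonneg (1 + h ^ 2)
  refine ⟨√(1 + h ^ 2) - h, ⟨by nlinarith, by nlinarith⟩, hz,
    div_mul_cancel₀ _ (by positivity), ?_⟩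
  have hη_eq : η = 2 * z / (1 + z ^ 2) * h := by rw [hh]; field_simp
  rw [hη_eq]
  linear_combination 2 * z / (1 + z ^ 2) * hsq

section

variable (h : IsJoukowskyPair a k η z) {T : ℝ} (hkT : T * (1 + k ^ 2) = 1 - k ^ 2)
include h hkT

lemma IsJoukowskyPair.η_sq_mul_one_sub : η ^ 2 * (1 - T ^ 2) = a ^ 2 * T ^ 2 := by
  have hD : (1 + k ^ 2) ^ 2 ≠ 0 := by positivity
  refine mul_right_cancel₀ hD ?_
  linear_combination (2 * k * η + a * (1 - k ^ 2)) * h.map_k -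
    (η ^ 2 + a ^ 2) * (T * (1 + k ^ 2) + (1 - k ^ 2)) * hkT

lemma IsJoukowskyPair.mul_le_η (hT : 0 < T) : a * T * (1 + T ^ 2 / 2) ≤ η := by
  have ha := h.a_pos
  refine (sq_le_sq₀ (by positivity) h.η_pos.le).1 ?_
  have hle : (1 - T ^ 2) * (1 + T ^ 2 / 2) ^ 2 ≤ 1 := by nlinarith [sq_nonneg (T ^ 2), sq_nonneg T]
  calc (a * T * (1 + T ^ 2 / 2)) ^ 2 = η ^ 2 * ((1 - T ^ 2) * (1 + T ^ 2 / 2) ^ 2) := by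
        linear_combination -(1 + T ^ 2 / 2) ^ 2 * h.η_sq_mul_one_sub hkT
    _ ≤ η ^ 2 := mul_le_of_le_one_right (sq_nonneg η) hle

lemma IsJoukowskyPair.sq_le_two_fifths (hη : 3 * η ^ 2 ≤ 2 * a ^ 2) : T ^ 2 ≤ 2 / 5 := by
  have hpos : 0 < a ^ 2 + η ^ 2 := add_pos (pow_pos h.a_pos 2) (pow_pos h.η_pos 2)
  refine le_of_mul_le_mul_right ?_ hpos
  linarith [h.η_sq_mul_one_sub hkT]

end

lemma artanhMajorant_add_reflection_cost_le {q X v : ℝ} (hq : q ∈ Icc (0 : ℝ) (2 / 5)) (hv : 0 < v)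
    (hX₀ : X ≠ 0) (hX₁ : |X| ≤ 1) (hroot : v * (240 / 601) * (1 + X ^ 2) = 2 * (v - 1) * X) :
    artanhMajorant q ((1 - X ^ 2) / (1 + X ^ 2)) +
        19 / 29 * log (5 / 24 * (1 - X * (5 / 24)) / |X - 5 / 24|) ≤
      243 / 500 * (240 / 601) * (1 + q / 2) * v := by
  obtain ⟨hX_ge, hX_le⟩ := abs_le.1 hX₁
  have hvX : v * ((X - 5 / 24) * (1 - 5 / 24 * X)) = 601 / 576 * X := by
    linear_combination -(601 / 1152) * hroot
  have hP' : 0 < 1 - 5 / 24 * X := by linarith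
  rcases hX₀.lt_or_gt with hneg | hpos
  · have hcost := reflection_cost_neg (x := -X) hq ⟨by linarith, by linarith⟩
    have hv_eq : v = 601 / 576 * (-X / ((-X + 5 / 24) * (1 + 5 / 24 * -X))) := by
      have hP : 0 < -X + 5 / 24 := by linarith
      have hP'' : 0 < 1 + 5 / 24 * -X := by linarith
      rw [← mul_div_assoc, eq_div_iff (mul_pos hP hP'').ne']
      linear_combination -hvX
    rw [neg_sq] at hcost
    rw [abs_of_neg (by linarith), hv_eq, show -(X - 5 / 24) = -X + 5 / 24 by ring,
      show 1 - X * (5 / 24) = 1 + 5 / 24 * -X by ring]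
    linarith
  · have hzX : 5 / 24 < X := by
      have hprod : 0 < (X - 5 / 24) * (1 - 5 / 24 * X) :=
        pos_of_mul_pos_right (hvX ▸ by positivity) hv.le
      exact sub_pos.1 (pos_of_mul_pos_left hprod hP'.le)
    have hcost := reflection_cost_pos hq ⟨hzX, hX_le⟩
    have hv_eq : v = 601 / 576 * (X / ((X - 5 / 24) * (1 - 5 / 24 * X))) := by
      rw [← mul_div_assoc, eq_div_iff (mul_pos (sub_pos.2 hzX) hP').ne', hvX]
    rw [abs_of_pos (sub_pos.2 hzX), hv_eq, mul_comm X (5 / 24)]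
    linarith

lemma reflectionBound_of_le (h : IsJoukowskyPair (240 / 601) k η (5 / 24)) (hη : η ≤ 100 / 307) :
    ReflectionBound (240 / 601) k η ((1 - k ^ 2) / (1 + k ^ 2) * (19 / 29)) (243 / 500)
      (5 / 24) := by
  intro X v hv hX₀ hX₁ hroot
  set T := (1 - k ^ 2) / (1 + k ^ 2)
  obtain ⟨hk, hk₁⟩ := h.k_mem
  have hT : 0 < T := div_pos (by nlinarith) (by positivity)
  have hkT : T * (1 + k ^ 2) = 1 - k ^ 2 := div_mul_cancel₀ _ (by positivity)
  have hq : T ^ 2 ∈ Icc (0 : ℝ) (2 / 5) :=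
    ⟨sq_nonneg T, h.sq_le_two_fifths hkT (by nlinarith [h.η_pos])⟩
  have hcost := artanhMajorant_add_reflection_cost_le hq hv hX₀ hX₁ hroot
  have hW := log_quotient_le_artanhMajorant hk hT hkT hq.2 hX₁
  have hη_le := mul_le_mul_of_nonneg_right (h.mul_le_η hkT hT) hv.le
  have hmul := mul_le_mul_of_nonneg_left hcost hT.le
  linarith

lemma eval_normSqProd_le_of_large_sum {v : Multiset ℝ} (hv : ∀ x ∈ v, 0 < x)
    (hbound : ∀ w ∈ Icc (0 : ℝ) 2, |(reciprocalProd v).eval w| ≤ 1) (hsum : 307 / 50 ≤ v.sum) :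
    (normSqProd v).eval ((2 / v.sum) ^ 2) ≤ 7 := by
  have hpos : 0 < v.sum := by linarith
  obtain ⟨k, h⟩ := exists_isJoukowskyPair (z := 5 / 24) (div_pos two_pos hpos) (by norm_num)
  rw [show (2 * (5 / 24) / (1 + (5 / 24) ^ 2) : ℝ) = 240 / 601 by norm_num] at h
  have hb := reflectionBound_of_le h (by rw [div_le_iff₀ hpos]; linarith)
  refine (hb.eval_normSqProd_le_exp h (by norm_num) (by norm_num) hv hbound).trans ?_
  rw [div_mul_cancel₀ _ hpos.ne', ← le_log_iff_exp_le (by norm_num)]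
  linarith [lt_log_seven]

end LargeSum
/-! ### The inequality at a critical point -/

section CriticalPoint

lemma abs_eval_one_reciprocalProd_le {v : Multiset ℝ} (hv : ∀ x ∈ v, x ∈ Icc (0 : ℝ) 2) :
    |(reciprocalProd v).eval 1| ≤ 1 ∧ |(reciprocalProd v).derivative.eval 1| ≤ v.sum := by
  induction v using Multiset.induction with
  | empty => simp [reciprocalProd, linearProd]
  | cons x v ih =>
    obtain ⟨hx, hv⟩ := Multiset.forall_mem_cons.1 hv
    obtain ⟨heval, hderiv⟩ := ih hv
    have hcons : reciprocalProd (x ::ₘ v) = (1 - C x * X) * reciprocalProd v := by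
      simp [reciprocalProd, linearProd, sub_eq_add_neg]
    have hx' : |1 - x| ≤ 1 := abs_le.2 ⟨by linarith [hx.2], by linarith [hx.1]⟩
    constructor
    · rw [hcons, eval_mul, abs_mul]
      simpa using mul_le_one₀ hx' (abs_nonneg _) heval
    · have hval : (reciprocalProd (x ::ₘ v)).derivative.eval 1 =
          (1 - x) * (reciprocalProd v).derivative.eval 1 - x * (reciprocalProd v).eval 1 := by
        rw [hcons, derivative_mul]
        simp
        ring
      rw [hval, Multiset.sum_cons]
      refine (abs_sub _ _).trans ?_
      rw [abs_mul, abs_mul, abs_of_nonneg hx.1]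
      nlinarith [abs_nonneg ((reciprocalProd v).derivative.eval 1),
        mul_le_mul_of_nonneg_left heval hx.1]

lemma abs_derivative_reciprocalProd_eval_one_le_sum {v : Multiset ℝ} (hv : ∀ x ∈ v, 0 < x)
    (hbound : ∀ w ∈ Icc (0 : ℝ) 2, |(reciprocalProd v).eval w| ≤ 1)
    (hcrit : (derivative^[2] (reciprocalProd v)).eval 1 = 0) :
    |(reciprocalProd v).derivative.eval 1| ≤ v.sum := by
  rcases le_or_gt v.sum 2 with h2 | h2
  · exact (abs_eval_one_reciprocalProd_le fun x hx => ⟨(hv x hx).le,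
      (Multiset.single_le_sum (fun y hy => (hv y hy).le) x hx).trans h2⟩).2
  by_contra! hlt
  have hpos : 0 < v.sum := by linarith
  have hlower := fun {η : ℝ} => quartic_lt_eval_normSqProd (η := η) hv hbound hcrit h2.le hlt
  rcases le_total v.sum (307 / 50) with hmoderate | hlarge
  · have hlow := hlower one_pos (by linarith)
    have hup := eval_one_normSqProd_le hv h2.le hmoderate
    rw [one_mul, one_pow] at hlow
    exact hup.not_gt hlow
  · have hcancel : 2 / v.sum * v.sum = 2 := div_mul_cancel₀ 2 hpos.ne'
    have hlow := hlower (div_pos two_pos hpos) hcancel.ge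
    rw [hcancel] at hlow
    linarith [eval_normSqProd_le_of_large_sum hv hbound hlarge]

-- The substitution `x = M - w (M - y)` takes `M` to `w = 0`, `y` to `w = 1`, and `p / p(M)` to a
-- product of factors `1 - v w` with positive `v`.
lemma comp_sub_eq_reciprocalProd_of_splits {p : ℝ[X]} (hp : p.Splits) {M : ℝ}
    (hroots : ∀ r ∈ p.roots, r < M) (y : ℝ) :
    p.comp (C M - C (M - y) * X) =
      C (p.eval M) * reciprocalProd (p.roots.map fun r => (M - y) / (M - r)) := by
  refine Polynomial.funext fun w => ?_
  rw [eval_comp, eval_mul, eval_C, eval_reciprocalProd, hp.eval_eq_prod_roots,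
    hp.eval_eq_prod_roots, Multiset.map_map, mul_assoc, ← Multiset.prod_map_mul]
  refine congrArg _ (congrArg _ (Multiset.map_congr rfl fun r hr => ?_))
  have hMr : M - r ≠ 0 := (sub_pos.2 (hroots r hr)).ne'
  simp only [Function.comp_apply, eval_sub, eval_mul, eval_C, eval_X]
  field_simp
  ring

lemma eval_derivative_of_comp_sub_eq {p q : ℝ[X]} {M δ c : ℝ}
    (h : p.comp (C M - C δ * X) = C c * q) (w : ℝ) :
    δ * p.derivative.eval (M - δ * w) = -(c * q.derivative.eval w) ∧
      δ ^ 2 * (derivative^[2] p).eval (M - δ * w) = c * (derivative^[2] q).eval w := by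
  have hderiv : derivative (C M - C δ * X) = -C δ := by simp
  have h1 := congrArg derivative h
  rw [derivative_comp, hderiv, derivative_C_mul] at h1
  have h2 := congrArg derivative h1
  rw [derivative_mul, derivative_comp, hderiv, derivative_C_mul, derivative_neg, derivative_C] at h2
  have h1w := congrArg (eval w) h1
  have h2w := congrArg (eval w) h2
  simp only [eval_sub, eval_mul, eval_neg, eval_comp, eval_C, eval_X, neg_zero, zero_mul,
    zero_add] at h1w h2w
  simp only [Function.iterate_succ_apply', Function.iterate_zero_apply]
  exact ⟨by linarith, by linarith⟩

lemma mul_eval_derivative_eq_mul_sum_of_splits {p : ℝ[X]} (hp : p.Splits) {M : ℝ}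
    (hM : p.eval M ≠ 0) (δ : ℝ) :
    δ * p.derivative.eval M = p.eval M * (p.roots.map fun r => δ / (M - r)).sum := by
  have hsum := hp.eval_derivative_div_eval_of_ne_zero hM
  rw [div_eq_iff hM] at hsum
  simp only [hsum, div_eq_mul_one_div δ, Multiset.sum_map_mul_left]
  ring

lemma abs_eval_derivative_le_of_eval_iterate_derivative_two_eq_zero {p : ℝ[X]} (hp : p.Splits)
    {M y : ℝ} (hroots : ∀ r ∈ p.roots, r < M) (hy : y ∈ Ico 0 M)
    (hbound : ∀ x ∈ Icc (-M) M, |p.eval x| ≤ |p.eval M|)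
    (hcrit : (derivative^[2] p).eval y = 0) :
    |p.derivative.eval y| ≤ |p.derivative.eval M| := by
  rcases eq_or_ne p 0 with rfl | hp0
  · simp
  have hM : p.eval M ≠ 0 := fun h => (hroots M ((mem_roots hp0).2 h)).false
  have hδ : 0 < M - y := sub_pos.2 hy.2
  set v := p.roots.map fun r => (M - y) / (M - r)
  have hv : ∀ x ∈ v, 0 < x :=
    Multiset.forall_mem_map_iff.2 fun r hr => div_pos hδ (sub_pos.2 (hroots r hr))
  have hcomp := comp_sub_eq_reciprocalProd_of_splits hp hroots y
  obtain ⟨hderiv, hderiv2⟩ := eval_derivative_of_comp_sub_eq hcomp 1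
  rw [mul_one, sub_sub_cancel] at hderiv hderiv2
  have hvbound : ∀ w ∈ Icc (0 : ℝ) 2, |(reciprocalProd v).eval w| ≤ 1 := fun w hw => by
    have hx : M - (M - y) * w ∈ Icc (-M) M :=
      ⟨by nlinarith [hw.2, hy.1, hδ], by nlinarith [hw.1, hδ]⟩
    have heval : p.eval (M - (M - y) * w) = p.eval M * (reciprocalProd v).eval w := by
      simpa [eval_comp] using congrArg (eval w) hcomp
    have hle := hbound _ hx
    rw [heval, abs_mul] at hle
    exact le_of_mul_le_mul_left (by simpa using hle) (abs_pos.2 hM)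
  have hvcrit : (derivative^[2] (reciprocalProd v)).eval 1 = 0 := by
    rw [hcrit, mul_zero] at hderiv2
    exact (mul_eq_zero.1 hderiv2.symm).resolve_left hM
  refine le_of_mul_le_mul_left ?_ hδ
  calc (M - y) * |p.derivative.eval y|
      = |p.eval M| * |(reciprocalProd v).derivative.eval 1| := by
        rw [← abs_mul, ← abs_neg (_ * _), ← hderiv, abs_mul, abs_of_pos hδ]
    _ ≤ |p.eval M| * |v.sum| := by
        refine mul_le_mul_of_nonneg_left ?_ (abs_nonneg _)
        exact (abs_derivative_reciprocalProd_eval_one_le_sum hv hvbound hvcrit).trans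
          (le_abs_self _)
    _ = (M - y) * |p.derivative.eval M| := by
        rw [← abs_mul, ← mul_eval_derivative_eq_mul_sum_of_splits hp hM, abs_mul, abs_of_pos hδ]

end CriticalPoint

/-! ### Propagation to the derivatives -/

section EndpointMaximal

lemma abs_eval_neg_of_comp_neg {p : ℝ[X]} (hp : p.comp (-X) = p ∨ p.comp (-X) = -p) (x : ℝ) :
    |p.eval (-x)| = |p.eval x| := by
  have heval : p.eval (-x) = (p.comp (-X)).eval x := by simp [eval_comp]
  rcases hp with h | h <;> simp [heval, h]

lemma derivative_comp_neg_X (p : ℝ[X]) : derivative (p.comp (-X)) = -p.derivative.comp (-X) := by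
  simp [derivative_comp]

lemma eval_derivative_ne_zero_of_roots_lt {p : ℝ[X]} (hp : p.Splits) (hdeg : p.natDegree ≠ 0)
    {x : ℝ} (hx : ∀ r ∈ p.roots, r < x) : p.derivative.eval x ≠ 0 := by
  have hp0 : p ≠ 0 := by
    rintro rfl
    exact hdeg natDegree_zero
  have heval : p.eval x ≠ 0 := fun h => (hx x ((mem_roots hp0).2 h)).false
  have hsum := hp.eval_derivative_div_eval_of_ne_zero heval
  have hne : p.roots ≠ 0 := fun h =>
    hdeg (by rw [hp.natDegree_eq_card_roots, h, Multiset.card_zero])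
  have hpos : 0 < (p.roots.map fun r => 1 / (x - r)).sum := by
    obtain ⟨r, hr⟩ := Multiset.exists_mem_of_ne_zero hne
    exact (one_div_pos.2 (sub_pos.2 (hx r hr))).trans_le <| Multiset.single_le_sum
      (Multiset.forall_mem_map_iff.2 fun s hs => (one_div_pos.2 (sub_pos.2 (hx s hs))).le) _
      (Multiset.mem_map_of_mem _ hr)
  intro h
  rw [h, zero_div] at hsum
  exact hpos.ne hsum

/-- A real-rooted polynomial of definite parity with all its roots below `M` whose absolute value
on `[-M, M]` is maximal at the endpoints: the class of polynomials that is closed under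
differentiation. Parity is expressed by `p(-x) = ± p(x)`, which also admits `p = 0`. -/
structure IsEndpointMaximal (M : ℝ) (p : ℝ[X]) : Prop where
  splits : p.Splits
  roots_lt : ∀ r ∈ p.roots, r < M
  parity : p.comp (-X) = p ∨ p.comp (-X) = -p
  abs_eval_le : ∀ x ∈ Icc (-M) M, |p.eval x| ≤ |p.eval M|

namespace IsEndpointMaximal

variable {M : ℝ} {p : ℝ[X]}

lemma derivative_parity (h : IsEndpointMaximal M p) :
    p.derivative.comp (-X) = p.derivative ∨ p.derivative.comp (-X) = -p.derivative := by
  have hderiv := derivative_comp_neg_X p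
  rcases h.parity with hp | hp <;> rw [hp] at hderiv
  · exact .inr (neg_eq_iff_eq_neg.1 hderiv.symm)
  · exact .inl (neg_injective (by rw [← hderiv, derivative_neg]))

-- At an interior maximum `y` of `|p'|` either `p'(y) = 0` or `p''(y) = 0`.
lemma abs_eval_derivative_le (h : IsEndpointMaximal M p) :
    ∀ x ∈ Icc (-M) M, |p.derivative.eval x| ≤ |p.derivative.eval M| := by
  intro x hx
  obtain ⟨x₀, hx₀, hmax⟩ := isCompact_Icc.exists_isMaxOn (s := Icc (-M) M) ⟨x, hx⟩
    (f := fun x => |p.derivative.eval x|) (by fun_prop)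
  have habs : |p.derivative.eval (|x₀|)| = |p.derivative.eval x₀| := by
    rcases abs_choice x₀ with hx₀ | hx₀ <;> rw [hx₀]
    exact abs_eval_neg_of_comp_neg h.derivative_parity x₀
  set y := |x₀|
  have hymax : ∀ x ∈ Icc (-M) M, |p.derivative.eval x| ≤ |p.derivative.eval y| :=
    fun x hx => (hmax hx).trans_eq habs.symm
  refine (hymax x hx).trans ?_
  have hy0 : 0 ≤ y := abs_nonneg x₀
  rcases (abs_le.2 hx₀ : y ≤ M).eq_or_lt with hyM | hyM
  · exact (congrArg (fun z => |p.derivative.eval z|) hyM).le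
  have hlocal : IsLocalMax (fun x => (p.derivative ^ 2).eval x) y := by
    filter_upwards [Icc_mem_nhds (show -M < y by linarith) hyM] with x hx
    simpa only [eval_pow] using sq_le_sq.2 (hymax x hx)
  have hcrit : p.derivative.eval y = 0 ∨ p.derivative.derivative.eval y = 0 := by
    simpa [derivative_pow] using
      hlocal.hasDerivAt_eq_zero ((p.derivative ^ 2).hasDerivAt y)
  rcases hcrit with hcrit | hcrit
  · simp [hcrit]
  · exact abs_eval_derivative_le_of_eval_iterate_derivative_two_eq_zero h.splits h.roots_lt
      ⟨hy0, hyM⟩ h.abs_eval_le hcrit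

lemma derivative (h : IsEndpointMaximal M p) : IsEndpointMaximal M p.derivative where
  splits := by
    have hrolle := card_roots_le_derivative p
    have hcard := card_roots' p.derivative
    have hdeg := natDegree_derivative_le p
    have hsplits := splits_iff_card_roots.1 h.splits
    exact splits_iff_card_roots.2 (by omega)
  roots_lt r hr := by
    by_contra! hMr
    have hdeg : p.natDegree ≠ 0 := fun h0 =>
      (mem_roots'.1 hr).1 (derivative_of_natDegree_zero h0)
    exact eval_derivative_ne_zero_of_roots_lt h.splits hdeg
      (fun s hs => (h.roots_lt s hs).trans_le hMr) (mem_roots'.1 hr).2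
  parity := h.derivative_parity
  abs_eval_le := h.abs_eval_derivative_le

lemma iterate_derivative (h : IsEndpointMaximal M p) (k : ℕ) :
    IsEndpointMaximal M (Polynomial.derivative^[k] p) := by
  induction k with
  | zero => exact h
  | succ k ih => simpa only [Function.iterate_succ_apply'] using ih.derivative

end IsEndpointMaximal

end EndpointMaximal

section BeyondRoots

variable {p : ℝ[X]} {M : ℝ}

lemma abs_eval_le_abs_eval_of_roots_le (hp : p.Splits) {y : ℝ} (hroots : ∀ r ∈ p.roots, r ≤ y)
    (hyM : y ≤ M) : |p.eval y| ≤ |p.eval M| := by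
  have hnonneg : 0 ≤ (p.roots.map fun r => y - r).prod :=
    Multiset.prod_nonneg (Multiset.forall_mem_map_iff.2 fun r hr => sub_nonneg.2 (hroots r hr))
  have hle : (p.roots.map fun r => y - r).prod ≤ (p.roots.map fun r => M - r).prod :=
    Multiset.prod_map_le_prod_map₀ _ _ (fun r hr => sub_nonneg.2 (hroots r hr))
      fun r _ => sub_le_sub_right hyM r
  rw [hp.eval_eq_prod_roots, hp.eval_eq_prod_roots, abs_mul, abs_mul, abs_of_nonneg hnonneg,
    abs_of_nonneg (hnonneg.trans hle)]
  gcongr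

lemma isEndpointMaximal_of_abs_eval_le_between_roots (hp : p.Splits)
    (hparity : p.comp (-X) = p ∨ p.comp (-X) = -p) (hroots : ∀ r ∈ p.roots, r < M)
    (hbound : ∀ a ∈ p.roots, ∀ b ∈ p.roots, ∀ x ∈ Icc a b, |p.eval x| ≤ |p.eval M|) :
    IsEndpointMaximal M p := by
  refine ⟨hp, hroots, hparity, fun x hx => ?_⟩
  have habs : |p.eval (|x|)| = |p.eval x| := by
    rcases abs_choice x with hx | hx <;> rw [hx]
    exact abs_eval_neg_of_comp_neg hparity x
  rw [← habs]
  by_cases hexists : ∃ b ∈ p.roots, |x| ≤ b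
  · obtain ⟨b, hb, hxb⟩ := hexists
    have hb0 : 0 ≤ b := (abs_nonneg x).trans hxb
    have hnegb : -b ∈ p.roots := by
      rw [mem_roots', IsRoot.def] at hb ⊢
      exact ⟨hb.1, abs_eq_zero.1 (by rw [abs_eval_neg_of_comp_neg hparity, hb.2, abs_zero])⟩
    exact hbound _ hnegb _ hb _ ⟨by linarith [abs_nonneg x], hxb⟩
  · push Not at hexists
    exact abs_eval_le_abs_eval_of_roots_le hp (fun r hr => (hexists r hr).le) (abs_le.2 hx)

end BeyondRoots

/-! ### Symmetry of the Gegenbauer–Sobolev polynomials -/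

section GegenbauerSobolev

variable {α : ℝ}

lemma integrableOn_one_sub_sq_rpow {β : ℝ} (hβ : -1 < β) :
    IntegrableOn (fun x : ℝ => (1 - x ^ 2) ^ β) (Ioo (-1) 1) := by
  have hright : IntervalIntegrable (fun x : ℝ => (1 - x ^ 2) ^ β) volume 0 1 := by
    have hsing : IntervalIntegrable (fun x : ℝ => (1 - x) ^ β) volume 0 1 := by
      simpa using (intervalIntegral.intervalIntegrable_rpow' (a := 1) (b := 0) hβ).comp_sub_left 1
    have hcont : ContinuousOn (fun x : ℝ => (1 + x) ^ β) (uIcc 0 1) :=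
      ContinuousOn.rpow_const (by fun_prop) fun x hx => by
        rw [uIcc_of_le zero_le_one] at hx
        exact .inl (by linarith [hx.1])
    refine (hsing.mul_continuousOn hcont).congr fun x hx => ?_
    rw [uIoc_of_le zero_le_one] at hx
    rw [← mul_rpow (by linarith [hx.2]) (by linarith [hx.1])]
    ring_nf
  have hleft : IntervalIntegrable (fun x : ℝ => (1 - x ^ 2) ^ β) volume (-1) 0 := by
    rw [IntervalIntegrable.iff_comp_neg]
    simpa using hright.symm
  exact (intervalIntegrable_iff_integrableOn_Ioo_of_le (by norm_num)).1 (hleft.trans hright)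

lemma integrableOn_gegInner (hα : -1 / 2 < α) (f g : ℝ[X]) :
    IntegrableOn (fun x : ℝ => f.eval x * g.eval x * (1 - x ^ 2) ^ (α - 1 / 2)) (Ioo (-1) 1) := by
  have hweight := integrableOn_one_sub_sq_rpow (β := α - 1 / 2) (by linarith)
  rw [← integrableOn_Icc_iff_integrableOn_Ioo] at hweight ⊢
  exact hweight.continuousOn_mul (by fun_prop) isCompact_Icc

lemma gegInner_sub_left (hα : -1 / 2 < α) (f g h : ℝ[X]) :
    gegInner α (f - g) h = gegInner α f h - gegInner α g h := by
  simp only [gegInner, eval_sub, sub_mul]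
  exact integral_sub (integrableOn_gegInner hα f h) (integrableOn_gegInner hα g h)

lemma gegInner_C_mul_left (c : ℝ) (f g : ℝ[X]) : gegInner α (C c * f) g = c * gegInner α f g := by
  simp only [gegInner, eval_mul, eval_C, mul_assoc, integral_const_mul]

lemma gegInner_comp_neg_X_left (f g : ℝ[X]) :
    gegInner α (f.comp (-X)) g = gegInner α f (g.comp (-X)) := by
  have hneg := intervalIntegral.integral_comp_neg (a := -1) (b := 1)
    fun x : ℝ => f.eval x * g.eval (-x) * (1 - x ^ 2) ^ (α - 1 / 2)
  simp only [neg_neg, neg_sq] at hneg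
  simpa only [gegInner, ← integral_Ioc_eq_integral_Ioo, eval_comp, eval_neg, eval_X,
    ← intervalIntegral.integral_of_le (show (-1 : ℝ) ≤ 1 by norm_num)] using hneg

lemma mul_self_mul_one_sub_sq_rpow_nonneg (f : ℝ[X]) {x : ℝ} (hx : x ∈ Ioo (-1) 1) :
    0 ≤ f.eval x * f.eval x * (1 - x ^ 2) ^ (α - 1 / 2) :=
  mul_nonneg (mul_self_nonneg _) (rpow_nonneg (by nlinarith [hx.1, hx.2]) _)

lemma gegInner_self_nonneg (f : ℝ[X]) : 0 ≤ gegInner α f f :=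
  setIntegral_nonneg measurableSet_Ioo fun _ hx => mul_self_mul_one_sub_sq_rpow_nonneg f hx

lemma gegInner_self_pos (hα : -1 / 2 < α) {f : ℝ[X]} (hf : f ≠ 0) : 0 < gegInner α f f := by
  rw [gegInner, setIntegral_pos_iff_support_of_nonneg_ae
    (ae_restrict_of_forall_mem measurableSet_Ioo fun _ hx =>
      mul_self_mul_one_sub_sq_rpow_nonneg f hx)
    (integrableOn_gegInner hα f f)]
  have hsupport : Ioo (-1 : ℝ) 1 \ f.roots.toFinset ⊆
      Function.support (fun x : ℝ => f.eval x * f.eval x * (1 - x ^ 2) ^ (α - 1 / 2)) ∩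
        Ioo (-1) 1 := fun x hx => by
    have heval : f.eval x ≠ 0 := fun h => hx.2 (by simp [hf, h])
    have hweight : 0 < 1 - x ^ 2 := by nlinarith [hx.1.1, hx.1.2]
    exact ⟨mul_ne_zero (mul_ne_zero heval heval) (rpow_pos_of_pos hweight _).ne', hx.1⟩
  refine lt_of_lt_of_le ?_ (measure_mono hsupport)
  rw [measure_sdiff_null (Finset.measure_zero _ _)]
  simp

variable {lam : ℝ}

lemma sobInner_sub_left (hα : -1 / 2 < α) (f g h : ℝ[X]) :
    sobInner α lam (f - g) h = sobInner α lam f h - sobInner α lam g h := by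
  simp only [sobInner, derivative_sub, gegInner_sub_left hα]
  ring

lemma sobInner_C_mul_left (c : ℝ) (f g : ℝ[X]) :
    sobInner α lam (C c * f) g = c * sobInner α lam f g := by
  simp only [sobInner, derivative_C_mul, gegInner_C_mul_left]
  ring

lemma sobInner_comp_neg_X_left (f g : ℝ[X]) :
    sobInner α lam (f.comp (-X)) g = sobInner α lam f (g.comp (-X)) := by
  have hderiv : gegInner α (-f.derivative.comp (-X)) g.derivative =
      gegInner α f.derivative (-g.derivative.comp (-X)) := by
    rw [← neg_comp, gegInner_comp_neg_X_left]
    simp [gegInner]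
  rw [sobInner, sobInner, derivative_comp_neg_X, derivative_comp_neg_X, hderiv,
    gegInner_comp_neg_X_left]

lemma sobInner_self_pos (hα : -1 / 2 < α) (hlam : 0 ≤ lam) {f : ℝ[X]} (hf : f ≠ 0) :
    0 < sobInner α lam f f :=
  add_pos_of_pos_of_nonneg (gegInner_self_pos hα hf) (mul_nonneg hlam (gegInner_self_nonneg _))

namespace IsMonicGegSobolev

variable {n : ℕ} {P Q : ℝ[X]}

lemma unique (hα : -1 / 2 < α) (hlam : 0 ≤ lam) (hP : IsMonicGegSobolev α lam n P)
    (hQ : IsMonicGegSobolev α lam n Q) : P = Q := by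
  obtain ⟨hPmonic, hPdeg, hPorth⟩ := hP
  obtain ⟨hQmonic, hQdeg, hQorth⟩ := hQ
  have hdegP : P.degree = n := by rw [degree_eq_natDegree hPmonic.ne_zero, hPdeg]
  have hdegQ : Q.degree = n := by rw [degree_eq_natDegree hQmonic.ne_zero, hQdeg]
  have hdeg : (P - Q).degree < n := hdegP ▸ degree_sub_lt_left (hdegP.trans hdegQ.symm)
    hPmonic.ne_zero (hPmonic.leadingCoeff.trans hQmonic.leadingCoeff.symm)
  by_contra hne
  refine (sobInner_self_pos hα hlam (sub_ne_zero.2 hne)).ne' ?_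
  rw [sobInner_sub_left hα, hPorth _ hdeg, hQorth _ hdeg, sub_zero]

lemma comp_neg_X (hQ : IsMonicGegSobolev α lam n Q) :
    IsMonicGegSobolev α lam n (C ((-1) ^ n) * Q.comp (-X)) := by
  obtain ⟨hmonic, hdeg, horth⟩ := hQ
  refine ⟨?_, ?_, fun p hp => ?_⟩
  · simpa [hdeg] using hmonic.neg_one_pow_natDegree_mul_comp_neg_X
  · rw [natDegree_C_mul (by simp), natDegree_comp, natDegree_neg, natDegree_X, mul_one, hdeg]
  · rw [sobInner_C_mul_left, sobInner_comp_neg_X_left, horth _ (by rwa [degree_comp_neg_X]),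
      mul_zero]

lemma parity (hα : -1 / 2 < α) (hlam : 0 ≤ lam) (hQ : IsMonicGegSobolev α lam n Q) :
    Q.comp (-X) = Q ∨ Q.comp (-X) = -Q := by
  have huniq := hQ.comp_neg_X.unique hα hlam hQ
  rcases neg_one_pow_eq_or ℝ n with hn | hn
  · exact .inl (by simpa [hn] using huniq)
  · exact .inr (neg_eq_iff_eq_neg.1 (by simpa [hn] using huniq))

end IsMonicGegSobolev

end GegenbauerSobolev

theorem gegSobolev_derivative_max_at_endpoints_general {Q : ℝ[X]} (hsplits : Q.Splits)
    (hparity : Q.comp (-X) = Q ∨ Q.comp (-X) = -Q) {M : ℝ} (hM : ∀ r ∈ Q.roots, r < M)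
    (hmax : ∀ a ∈ Q.roots, ∀ b ∈ Q.roots, ∀ x ∈ Icc a b, |Q.eval x| ≤ |Q.eval M|) (k : ℕ) :
    ∀ x ∈ Icc (-M) M, |(derivative^[k] Q).eval x| ≤ |(derivative^[k] Q).eval M| :=
  ((isEndpointMaximal_of_abs_eval_le_between_roots hsplits hparity hM hmax).iterate_derivative
    k).abs_eval_le

/-- Maximization of local extrema of the derivatives of Gegenbauer–Sobolev
polynomials: each `|d^k/dx^k Q_{n,λ}^{(α)}|` attains its maximum over
`[-M_{n,λ}, M_{n,λ}]` at the end-points. Here `r` enumerates the zeros of `Q`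
in increasing order, `N` is the maximum of `|Q|` over `[x_1, x_n]`, and
`M` is the least `t > x_n` with `|Q(t)| = N`. -/
theorem gegSobolev_derivative_max_at_endpoints (α lam : ℝ) (hα : -1/2 < α)
    (hlam : 0 ≤ lam) (n : ℕ) (hn : 3 ≤ n)
    (Q : Polynomial ℝ) (hQ : IsMonicGegSobolev α lam n Q)
    (r : Fin n → ℝ) (hr : StrictMono r)
    (hfact : Q = ∏ i, (X - Polynomial.C (r i)))
    (N : ℝ)
    (hN : IsGreatest
      ((fun x => |Q.eval x|) ''
        Set.Icc (r ⟨0, by omega⟩) (r ⟨n - 1, by omega⟩)) N)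
    (M : ℝ)
    (hM : IsLeast {t : ℝ | r ⟨n - 1, by omega⟩ < t ∧ |Q.eval t| = N} M) :
    ∀ k : ℕ, 1 ≤ k → k ≤ n →
      ∀ x ∈ Set.Icc (-M) M,
        |(derivative^[k] Q).eval x| ≤ |(derivative^[k] Q).eval M| := by
  have hroots : Q.roots = Finset.univ.val.map r := by
    rw [← roots_multiset_prod_X_sub_C (Finset.univ.val.map r), Multiset.map_map, hfact]
    rfl
  have hfirst (i : Fin n) : r ⟨0, by omega⟩ ≤ r i := hr.monotone (Fin.le_def.2 (Nat.zero_le _))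
  have hlast (i : Fin n) : r i ≤ r ⟨n - 1, by omega⟩ :=
    hr.monotone (Fin.le_def.2 (Nat.le_sub_one_of_lt i.2))
  refine fun k _ _ => gegSobolev_derivative_max_at_endpoints_general
    (hfact ▸ Splits.prod fun i _ => Splits.X_sub_C _) (hQ.parity hα hlam) ?_ ?_ k
  · simpa [hroots] using fun i => (hlast i).trans_lt hM.1.1
  · simpa [hroots] using fun i j x hix hxj =>
      (hN.2 ⟨x, ⟨(hfirst i).trans hix, hxj.trans (hlast j)⟩, rfl⟩).trans_eq hM.1.2.symm
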